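/- arXiv:2508.12624 — 4 statements merged into one kernel-verified Lean document; each statement's English description precedes it below -/
import Mathlib

section
/- Let Λ be a symplectic lattice admitting an orthogonal direct sum decomposition Λ = U₁ ⊕ U₂ ⊕ Λ'' with U₁, U₂ isometric to U. A primitive vector v ∈ Λ is splitting if and only if the element [v*] ∈ D_Λ is splitting. Consequently, v ↦ [v*] induces a bijection from the set of Γ_Λ-equivalence classes of splitting primitive vectors of Λ onto the set of splitting elements of D_Λ. -/
noncomputable section

open Submodule

variable {V : Type} [AddCommGroup V] [Module ℚ V]

/-- The dual lattice `Λ^∨ = {v ∈ Λ⊗ℚ : (v, Λ) ⊆ ℤ}` of a lattice `L` (inside the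
ambient rational vector space `V = Λ⊗ℚ`) with respect to the form `B`. -/
def dualLattice (B : V →ₗ[ℚ] V →ₗ[ℚ] ℚ) (L : Submodule ℤ V) : Submodule ℤ V where
  carrier := {v : V | ∀ x ∈ L, ∃ n : ℤ, B v x = (n : ℚ)}
  zero_mem' := fun x _ => ⟨0, by simp⟩
  add_mem' := by
    intro a b ha hb x hx
    obtain ⟨n, hn⟩ := ha x hx
    obtain ⟨m, hm⟩ := hb x hx
    exact ⟨n + m, by rw [map_add, LinearMap.add_apply, hn, hm]; push_cast; ring⟩
  smul_mem' := by
    intro c a ha x hx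
    obtain ⟨n, hn⟩ := ha x hx
    refine ⟨c * n, ?_⟩
    have h1 : B (c • a) x = (B.flip x) (c • a) := rfl
    rw [h1, map_zsmul, LinearMap.flip_apply, hn, zsmul_eq_mul]
    push_cast; ring

/-- A vector `v` is primitive in the lattice `L` if `ℚv ∩ L = ℤv`. -/
def IsPrimitive (L : Submodule ℤ V) (v : V) : Prop :=
  v ∈ L ∧ (Submodule.span ℚ {v}).restrictScalars ℤ ⊓ L = Submodule.span ℤ {v}

/-- `div(v) = d`, i.e. the ideal `(v, L) ⊆ ℤ` is generated by the positive integer `d`. -/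
def HasDiv (B : V →ₗ[ℚ] V →ₗ[ℚ] ℚ) (L : Submodule ℤ V) (v : V) (d : ℕ) : Prop :=
  0 < d ∧ (∀ x ∈ L, ∃ n : ℤ, B v x = (n : ℚ) * (d : ℚ)) ∧ (∃ x ∈ L, B v x = (d : ℚ))

/-- `v* = v / div(v)`. -/
def vstar (v : V) (d : ℕ) : V := ((d : ℚ))⁻¹ • v

lemma vstar_mem {B : V →ₗ[ℚ] V →ₗ[ℚ] ℚ} {L : Submodule ℤ V} {v : V} {d : ℕ}
    (h : HasDiv B L v d) : vstar v d ∈ dualLattice B L := by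
  intro x hx
  obtain ⟨n, hn⟩ := h.2.1 x hx
  refine ⟨n, ?_⟩
  have hd : (d : ℚ) ≠ 0 := Nat.cast_ne_zero.mpr h.1.ne'
  show B (((d : ℚ))⁻¹ • v) x = (n : ℚ)
  rw [map_smul, LinearMap.smul_apply, hn, smul_eq_mul]
  field_simp

/-- The discriminant group `D_Λ = Λ^∨ / Λ`. -/
abbrev DiscGroup (B : V →ₗ[ℚ] V →ₗ[ℚ] ℚ) (L : Submodule ℤ V) :=
  dualLattice B L ⧸ (L.comap (dualLattice B L).subtype)

/-- The class of an element of the dual lattice in the discriminant group. -/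
def discCls (B : V →ₗ[ℚ] V →ₗ[ℚ] ℚ) (L : Submodule ℤ V) (v : dualLattice B L) :
    DiscGroup B L := Submodule.Quotient.mk v

/-- `γ` is an isometry of the lattice `L`, i.e. an element of `Sp(Λ)` (viewed as a
rational linear automorphism of the ambient space preserving `L` and the form). -/
def IsIsometry (B : V →ₗ[ℚ] V →ₗ[ℚ] ℚ) (L : Submodule ℤ V) (γ : V ≃ₗ[ℚ] V) : Prop :=
  (∀ v, v ∈ L ↔ γ v ∈ L) ∧ ∀ v w, B (γ v) (γ w) = B v w

/-- `γ` lies in `Γ_Λ`: it is an isometry of `L` acting trivially on the discriminant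
group, i.e. `γ(v) ≡ v mod Λ` for every `v ∈ Λ^∨`. -/
def InGamma (B : V →ₗ[ℚ] V →ₗ[ℚ] ℚ) (L : Submodule ℤ V) (γ : V ≃ₗ[ℚ] V) : Prop :=
  IsIsometry B L γ ∧ ∀ v ∈ dualLattice B L, γ v - v ∈ L

lemma isometry_dual_mem {B : V →ₗ[ℚ] V →ₗ[ℚ] ℚ} {L : Submodule ℤ V} {γ : V ≃ₗ[ℚ] V}
    (h : IsIsometry B L γ) {u : V} (hu : u ∈ dualLattice B L) :
    γ u ∈ dualLattice B L := by
  intro x hx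
  have hx' : γ.symm x ∈ L := by
    rw [h.1 (γ.symm x), LinearEquiv.apply_symm_apply]
    exact hx
  obtain ⟨n, hn⟩ := hu (γ.symm x) hx'
  refine ⟨n, ?_⟩
  have := h.2 u (γ.symm x)
  rw [LinearEquiv.apply_symm_apply] at this
  rw [this, hn]

/-- The transvection `T_{l,m} : v ↦ v + (l,v)m + (m,v)l` on the rational vector space. -/
def transvection (B : V →ₗ[ℚ] V →ₗ[ℚ] ℚ) (l m : V) : V →ₗ[ℚ] V :=
  LinearMap.id + (B l).smulRight m + (B m).smulRight l

/-- An orthogonal decomposition `Λ = U ⊕ Λ'` with `U` a hyperbolic plane spanned by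
`e, f` with `(e,f) = 1`. -/
def OrthoDecompU (B : V →ₗ[ℚ] V →ₗ[ℚ] ℚ) (L : Submodule ℤ V)
    (e f : V) (L' : Submodule ℤ V) : Prop :=
  e ∈ L ∧ f ∈ L ∧ L' ≤ L ∧ B e f = 1 ∧
  (∀ z ∈ L', B e z = 0 ∧ B f z = 0) ∧
  Submodule.span ℤ {e, f} ⊔ L' = L

/-- An orthogonal decomposition `Λ = U₁ ⊕ U₂ ⊕ Λ''` with `U₁, U₂` hyperbolic planes. -/
def OrthoDecompUU (B : V →ₗ[ℚ] V →ₗ[ℚ] ℚ) (L : Submodule ℤ V)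
    (e₁ f₁ e₂ f₂ : V) (L'' : Submodule ℤ V) : Prop :=
  e₁ ∈ L ∧ f₁ ∈ L ∧ e₂ ∈ L ∧ f₂ ∈ L ∧ L'' ≤ L ∧
  B e₁ f₁ = 1 ∧ B e₂ f₂ = 1 ∧
  B e₁ e₂ = 0 ∧ B e₁ f₂ = 0 ∧ B f₁ e₂ = 0 ∧ B f₁ f₂ = 0 ∧
  (∀ z ∈ L'', B e₁ z = 0 ∧ B f₁ z = 0 ∧ B e₂ z = 0 ∧ B f₂ z = 0) ∧
  Submodule.span ℤ {e₁, f₁} ⊔ Submodule.span ℤ {e₂, f₂} ⊔ L'' = L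

/-- An orthogonal decomposition `Λ = U ⊕ U(p) ⊕ ⋯ ⊕ U(p)`. -/
def OrthoDecompUUp (B : V →ₗ[ℚ] V →ₗ[ℚ] ℚ) (L : Submodule ℤ V) (p : ℕ)
    (e f : V) {ι : Type} (E F : ι → V) : Prop :=
  e ∈ L ∧ f ∈ L ∧ (∀ i, E i ∈ L) ∧ (∀ i, F i ∈ L) ∧
  B e f = 1 ∧ (∀ i, B (E i) (F i) = (p : ℚ)) ∧
  (∀ i, B e (E i) = 0 ∧ B e (F i) = 0 ∧ B f (E i) = 0 ∧ B f (F i) = 0) ∧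
  (∀ i j, i ≠ j → B (E i) (E j) = 0 ∧ B (E i) (F j) = 0 ∧ B (F i) (F j) = 0) ∧
  Submodule.span ℤ ({e, f} ∪ Set.range E ∪ Set.range F) = L

/-- An orthogonal decomposition `Λ = U(d₁) ⊕ ⋯ ⊕ U(d_g)`. -/
def OrthoDecompType (B : V →ₗ[ℚ] V →ₗ[ℚ] ℚ) (L : Submodule ℤ V) {g : ℕ}
    (d : Fin g → ℕ) (E F : Fin g → V) : Prop :=
  (∀ i, E i ∈ L) ∧ (∀ i, F i ∈ L) ∧
  (∀ i, B (E i) (F i) = (d i : ℚ)) ∧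
  (∀ i j, i ≠ j → B (E i) (E j) = 0 ∧ B (E i) (F j) = 0 ∧ B (F i) (F j) = 0) ∧
  Submodule.span ℤ (Set.range E ∪ Set.range F) = L

lemma coe_int_addCircle (n : ℤ) : (((n : ℚ) : AddCircle (1 : ℚ))) = 0 := by
  have hmem : ((n : ℚ)) ∈ AddSubgroup.zmultiples (1 : ℚ) := ⟨n, by simp⟩
  exact (QuotientAddGroup.eq_zero_iff _).mpr hmem

lemma bilin_antisymm (B : V →ₗ[ℚ] V →ₗ[ℚ] ℚ) (halt : ∀ v, B v v = 0) (a b : V) :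
    B a b = - B b a := by
  have h := halt (a + b)
  simp only [map_add, LinearMap.add_apply] at h
  rw [halt a, halt b] at h
  linarith

/-- The `ℚ/ℤ`-valued pairing on the dual lattice. -/
def rationalPairing (B : V →ₗ[ℚ] V →ₗ[ℚ] ℚ) (L : Submodule ℤ V) :
    dualLattice B L →ₗ[ℤ] dualLattice B L →ₗ[ℤ] AddCircle (1 : ℚ) :=
  LinearMap.mk₂ ℤ (fun v w => ((B v.1 w.1 : ℚ) : AddCircle (1 : ℚ)))
    (fun v v' w => by
      beta_reduce
      rw [Submodule.coe_add, map_add, LinearMap.add_apply]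
      exact QuotientAddGroup.mk_add (AddSubgroup.zmultiples (1 : ℚ)) _ _)
    (fun c v w => by
      beta_reduce
      have h1 : B ((c • v : dualLattice B L) : V) (w : V)
          = c • (B (v : V) (w : V)) := by
        have h2 : B ((c • v : dualLattice B L) : V) (w : V)
            = (B.flip (w : V)) ((c • v : dualLattice B L) : V) := rfl
        rw [h2, Submodule.coe_smul, map_zsmul, LinearMap.flip_apply]
      rw [h1]
      exact QuotientAddGroup.mk_zsmul (AddSubgroup.zmultiples (1 : ℚ)) _ _
    )
    (fun v w w' => by
      beta_reduce
      rw [Submodule.coe_add, map_add]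
      exact QuotientAddGroup.mk_add (AddSubgroup.zmultiples (1 : ℚ)) _ _)
    (fun c v w => by
      beta_reduce
      rw [Submodule.coe_smul, map_zsmul]
      exact QuotientAddGroup.mk_zsmul (AddSubgroup.zmultiples (1 : ℚ)) _ _)

/-- The discriminant form on `D_Λ`, with values in `ℚ/ℤ`. -/
def discForm (B : V →ₗ[ℚ] V →ₗ[ℚ] ℚ) (L : Submodule ℤ V) (halt : ∀ v, B v v = 0) :
    DiscGroup B L →ₗ[ℤ] DiscGroup B L →ₗ[ℤ] AddCircle (1 : ℚ) :=
  (Submodule.liftQ _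
    ((Submodule.liftQ _ (rationalPairing B L) (by
      intro v hv
      rw [LinearMap.mem_ker]
      refine LinearMap.ext fun w => ?_
      have hv' : (v : V) ∈ L := hv
      obtain ⟨n, hn⟩ := w.2 (v : V) hv'
      show ((B (v : V) (w : V) : ℚ) : AddCircle (1 : ℚ)) = 0
      have h3 : B (v : V) (w : V) = ((-n : ℤ) : ℚ) := by
        rw [bilin_antisymm B halt, hn]; push_cast; ring
      rw [h3]
      exact coe_int_addCircle _)).flip) (by
      intro w hw
      rw [LinearMap.mem_ker]
      refine LinearMap.ext fun x => ?_
      obtain ⟨v, rfl⟩ := Submodule.Quotient.mk_surjective _ x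
      have hw' : (w : V) ∈ L := hw
      obtain ⟨n, hn⟩ := v.2 (w : V) hw'
      show ((B (v : V) (w : V) : ℚ) : AddCircle (1 : ℚ)) = 0
      rw [hn]
      exact coe_int_addCircle _)).flip

/-- The orthogonal complement of a subgroup of the discriminant group with respect to
the discriminant form. -/
def discOrth (B : V →ₗ[ℚ] V →ₗ[ℚ] ℚ) (L : Submodule ℤ V) (halt : ∀ v, B v v = 0)
    (D' : Submodule ℤ (DiscGroup B L)) : Submodule ℤ (DiscGroup B L) :=
  ⨅ y ∈ D', LinearMap.ker ((discForm B L halt).flip y)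

/-- A splitting element of the discriminant group: `x` of order `d` lies in a subgroup
`D' ≅ (ℤ/d)²` with `D_Λ = D' ⊕ D'^⊥`. -/
def IsSplitElem (B : V →ₗ[ℚ] V →ₗ[ℚ] ℚ) (L : Submodule ℤ V) (halt : ∀ v, B v v = 0)
    (x : DiscGroup B L) : Prop :=
  ∃ D' : Submodule ℤ (DiscGroup B L), x ∈ D' ∧
    Nonempty (D' ≃+ (ZMod (addOrderOf x) × ZMod (addOrderOf x))) ∧
    D' ⊔ discOrth B L halt D' = ⊤ ∧ D' ⊓ discOrth B L halt D' = ⊥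

/-- The orthogonal complement `Λ₁^⊥ = {z ∈ Λ : (z, Λ₁) = 0}` of a sublattice inside `L`. -/
def orthCompIn (B : V →ₗ[ℚ] V →ₗ[ℚ] ℚ) (L L₁ : Submodule ℤ V) : Submodule ℤ V where
  carrier := {z | z ∈ L ∧ ∀ y ∈ L₁, B z y = 0}
  zero_mem' := ⟨L.zero_mem, fun y _ => by simp⟩
  add_mem' := by
    intro a b ha hb
    refine ⟨L.add_mem ha.1 hb.1, fun y hy => ?_⟩
    rw [map_add, LinearMap.add_apply, ha.2 y hy, hb.2 y hy, add_zero]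
  smul_mem' := by
    intro c a ha
    refine ⟨L.smul_mem c ha.1, fun y hy => ?_⟩
    have h1 : B (c • a) y = (B.flip y) (c • a) := rfl
    rw [h1, map_zsmul, LinearMap.flip_apply, ha.2 y hy, smul_zero]

/-- A splitting (primitive) vector: `v` lies in a rank 2 sublattice `Λ₁` with
`Λ = Λ₁ ⊕ Λ₁^⊥` (orthogonal direct sum). -/
def IsSplitVec (B : V →ₗ[ℚ] V →ₗ[ℚ] ℚ) (L : Submodule ℤ V) (v : V) : Prop :=
  ∃ L₁ : Submodule ℤ V, v ∈ L₁ ∧ L₁ ≤ L ∧ Module.finrank ℤ L₁ = 2 ∧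
    L₁ ⊔ orthCompIn B L L₁ = L ∧ L₁ ⊓ orthCompIn B L L₁ = ⊥

end

/-!
Write `d = div v` and `a = v*`. Both splitting conditions say that `a` has a partner `b ∈ Λ^∨`
with `(a, b) = 1 / d` and `d b ∈ Λ`. Such a pair yields the plane `⟨d a, d b⟩` splitting off from
`Λ` and the plane `⟨[a], [b]⟩` splitting off from `D_Λ`. Conversely, a rank-2 summand containing `v`
contains `d b` for some such `b`, while a summand `D' ≅ (ℤ/d)²` containing `[a]` contains some such
`[b]`: the integers `d (a, y)`, for `y` lifting an element of `D'`, form an ideal of `ℤ`, which is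
all of `ℤ` as the form on `D'` is nondegenerate.

That `[v*]` determines the `Γ_Λ`-orbit of a primitive `v` is Eichler's argument: given one
hyperbolic plane `⟨e, f⟩`, transvections bring `v*` into the position `(v*, f) = 1`, where two
vectors with the same class differ by two more transvections. Every class in `D_Λ` has a lift `u`
with `(u, f) = 1`, and if the class has finite order `d`, then `d u` is primitive with `(d u)* = u`.
-/

section

open Submodule

variable {V : Type} [AddCommGroup V] [Module ℚ V] {B : V →ₗ[ℚ] V →ₗ[ℚ] ℚ} {L : Submodule ℤ V}

/-! ### Abelian groups and lattices -/

theorem isOfFinAddOrder_addCircle_rat (x : AddCircle (1 : ℚ)) : IsOfFinAddOrder x := by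
  obtain ⟨q, rfl⟩ := QuotientAddGroup.mk_surjective x
  have := AddCircle.addOrderOf_coe_rat (p := (1 : ℚ)) (q := q)
  simp only [Rat.cast_id, mul_one] at this
  exact addOrderOf_pos_iff.mp (this ▸ q.den_pos)

theorem coe_addCircle_one_eq_zero_iff {q : ℚ} :
    (q : AddCircle (1 : ℚ)) = 0 ↔ ∃ n : ℤ, q = n :=
  (AddCircle.coe_eq_zero_iff (1 : ℚ)).trans (by simp [eq_comm])

theorem eq_top_of_forall_dvd_mul {R : Type*} [CommRing R] [IsDomain R] [IsPrincipalIdealRing R]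
    {I : Ideal R} {d : R} (hd : d ≠ 0) (hdI : d ∈ I)
    (h : ∀ k, (∀ m ∈ I, d ∣ k * m) → d ∣ k) : I = ⊤ := by
  obtain ⟨g, rfl⟩ := IsPrincipalIdealRing.principal I
  obtain ⟨k, rfl⟩ := Ideal.mem_span_singleton.mp hdI
  have hk : g * k ∣ k := h k fun m hm => by
    rw [mul_comm g]
    exact mul_dvd_mul_left k (Ideal.mem_span_singleton.mp hm)
  have hg : g ∣ 1 := by
    rw [← mul_dvd_mul_iff_right (right_ne_zero_of_mul hd), one_mul]
    exact hk
  exact Ideal.span_singleton_eq_top.mpr (isUnit_of_dvd_one hg)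

theorem nonempty_span_pair_addEquiv_zmod_prod {A : Type*} [AddCommGroup A] {d : ℕ} {x y : A}
    (hx : d • x = 0) (hy : d • y = 0)
    (hxy : ∀ s t : ℤ, s • x + t • y = 0 → (d : ℤ) ∣ s ∧ (d : ℤ) ∣ t) :
    Nonempty (span ℤ {x, y} ≃+ ZMod d × ZMod d) := by
  let lift (z : A) (hz : d • z = 0) : ZMod d →+ A :=
    ZMod.lift d ⟨zmultiplesHom A z, by simpa using hz⟩
  let φ : ZMod d × ZMod d →ₗ[ℤ] A := ((lift x hx).coprod (lift y hy)).toIntLinearMap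
  have hφ (s t : ℤ) : φ (s, t) = s • x + t • y := by simp [φ, lift]
  have hinj : Function.Injective φ := by
    rw [injective_iff_map_eq_zero]
    rintro ⟨s, t⟩ h
    obtain ⟨s, rfl⟩ := ZMod.intCast_surjective s
    obtain ⟨t, rfl⟩ := ZMod.intCast_surjective t
    rw [hφ] at h
    simpa [Prod.ext_iff, ZMod.intCast_zmod_eq_zero_iff_dvd] using hxy s t h
  have hrange : LinearMap.range φ = span ℤ {x, y} := by
    ext z
    rw [mem_span_pair]
    constructor
    · rintro ⟨⟨s, t⟩, rfl⟩
      obtain ⟨s, rfl⟩ := ZMod.intCast_surjective s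
      obtain ⟨t, rfl⟩ := ZMod.intCast_surjective t
      exact ⟨s, t, (hφ s t).symm⟩
    · rintro ⟨s, t, rfl⟩
      exact ⟨(s, t), hφ s t⟩
  exact ⟨(hrange ▸ LinearEquiv.ofInjective φ hinj).symm.toAddEquiv⟩

theorem linearIndependent_pair_of_apply_ne_zero {R M : Type*} [CommRing R] [NoZeroDivisors R]
    [AddCommGroup M] [Module R M] {B : M →ₗ[R] M →ₗ[R] R} (halt : ∀ v, B v v = 0) {v w : M}
    (h : B v w ≠ 0) : LinearIndependent R ![v, w] := by
  rw [LinearIndependent.pair_iff]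
  intro s t hst
  have hs : s * B v w = 0 := by simpa [halt] using congrArg (B · w) hst
  have ht : t * B v w = 0 := by simpa [halt] using congrArg (B v) hst
  exact ⟨(mul_eq_zero.mp hs).resolve_right h, (mul_eq_zero.mp ht).resolve_right h⟩

theorem mem_span_pair_of_finrank_eq_two {W : Type*} [AddCommGroup W] [Module ℚ W]
    {M : Submodule ℤ W} (hM : Module.finrank ℤ M = 2) {v w y : W} (hv : v ∈ M) (hw : w ∈ M)
    (hy : y ∈ M) (hvw : LinearIndependent ℚ ![v, w]) : y ∈ span ℚ {v, w} := by
  by_contra hy'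
  have hindep : LinearIndependent ℚ ![y, v, w] :=
    hvw.finCons (by simpa [Matrix.range_cons, Set.pair_comm] using hy')
  have hindepM : LinearIndependent ℤ ![(⟨y, hy⟩ : M), ⟨v, hv⟩, ⟨w, hw⟩] := by
    refine LinearIndependent.of_comp M.subtype ?_
    convert hindep.restrict_scalars' ℤ using 1
    ext i
    fin_cases i <;> rfl
  have hcard := hindepM.cardinal_lift_le_rank
  rw [(Module.rank_eq_ofNat_iff_finrank_eq_ofNat 2).mpr hM] at hcard
  norm_num at hcard

/-! ### The dual lattice and the discriminant form -/

theorem apply_smul_mem {N : Submodule ℤ V} {u x y : V} (hu : u ∈ dualLattice B L) (hx : x ∈ L)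
    (hy : y ∈ N) : B u x • y ∈ N := by
  obtain ⟨n, hn⟩ := hu x hx
  rw [hn, Int.cast_smul_eq_zsmul]
  exact N.smul_mem n hy

theorem discCls_eq_iff {a b : dualLattice B L} :
    discCls B L a = discCls B L b ↔ (a - b : V) ∈ L :=
  Submodule.Quotient.eq _

theorem discCls_eq_zero_iff {a : dualLattice B L} : discCls B L a = 0 ↔ (a : V) ∈ L :=
  Submodule.Quotient.mk_eq_zero _

theorem nsmul_discCls_eq_zero_iff {a : dualLattice B L} {k : ℕ} :
    k • discCls B L a = 0 ↔ k • (a : V) ∈ L :=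
  discCls_eq_zero_iff (a := k • a)

theorem discForm_discCls_eq_zero_iff {halt : ∀ v, B v v = 0} {a b : dualLattice B L} :
    discForm B L halt (discCls B L a) (discCls B L b) = 0 ↔ ∃ n : ℤ, B a b = n :=
  coe_addCircle_one_eq_zero_iff

theorem mem_discOrth_iff_le_ker {halt : ∀ v, B v v = 0} {D' : Submodule ℤ (DiscGroup B L)}
    {x : DiscGroup B L} :
    x ∈ discOrth B L halt D' ↔ D' ≤ LinearMap.ker (discForm B L halt x) := by
  simp [discOrth, SetLike.le_def]

/-- The form embeds `D'` into `Hom(D', ℚ/ℤ)`, a torsion group because `D'` is finitely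
generated. -/
theorem isOfFinAddOrder_of_inf_discOrth_eq_bot {halt : ∀ v, B v v = 0}
    {D' : Submodule ℤ (DiscGroup B L)} (hfg : D'.FG) (hinf : D' ⊓ discOrth B L halt D' = ⊥)
    {x : DiscGroup B L} (hx : x ∈ D') : IsOfFinAddOrder x := by
  obtain ⟨S, rfl⟩ := hfg
  let n := ∏ s ∈ S, addOrderOf (discForm B L halt x s)
  have hn : 0 < n := Finset.prod_pos fun s _ =>
    addOrderOf_pos_iff.mpr (isOfFinAddOrder_addCircle_rat _)
  have horth : n • x ∈ discOrth B L halt (span ℤ S) := by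
    rw [mem_discOrth_iff_le_ker, span_le]
    intro s hs
    have : n • discForm B L halt x s = 0 :=
      addOrderOf_dvd_iff_nsmul_eq_zero.mp (Finset.dvd_prod_of_mem _ hs)
    simpa using this
  have hnx : n • x ∈ span ℤ S ⊓ discOrth B L halt (span ℤ S) :=
    ⟨nsmul_mem hx n, horth⟩
  rw [hinf, mem_bot] at hnx
  exact isOfFinAddOrder_iff_nsmul_eq_zero.mpr ⟨n, hn, hnx⟩

theorem IsSplitElem.isOfFinAddOrder {halt : ∀ v, B v v = 0} {x : DiscGroup B L}
    (hx : IsSplitElem B L halt x) : IsOfFinAddOrder x := by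
  obtain ⟨D', hxD, ⟨e⟩, -, hinf⟩ := hx
  have hZMod (n : ℕ) : Module.Finite ℤ (ZMod n) :=
    .of_surjective (Int.castAddHom (ZMod n)).toIntLinearMap ZMod.intCast_surjective
  have : Module.Finite ℤ D' := .equiv e.symm.toIntLinearEquiv
  exact isOfFinAddOrder_of_inf_discOrth_eq_bot (Module.Finite.iff_fg.mp this) hinf hxD

/-! ### Hyperbolic pairs -/

/-- Two vectors of the dual lattice with `(a, b) = 1 / d` and `d • a`, `d • b` in the lattice.
Then `d • a, d • b` span a copy of `U(d)`, whose discriminant group `(ℤ/d)²` is generated by the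
classes of `a` and `b`; the definition links splitting vectors to splitting elements. -/
structure IsHyperbolicPair (d : ℕ) (a b : dualLattice B L) : Prop where
  nsmul_left_mem : d • (a : V) ∈ L
  nsmul_right_mem : d • (b : V) ∈ L
  mul_apply : (d : ℚ) * B a b = 1

/-- The orthogonal projection onto the plane `ℚa + ℚb`, for `a` and `b` with `(a, b) = 1 / d`. -/
def planeProj (B : V →ₗ[ℚ] V →ₗ[ℚ] ℚ) (d : ℕ) (a b : V) : V →ₗ[ℚ] V :=
  (B a).smulRight (d • b) - (B b).smulRight (d • a)

namespace IsHyperbolicPair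

variable {halt : ∀ v, B v v = 0} {d : ℕ} {a b : dualLattice B L}

theorem natCast_ne_zero (h : IsHyperbolicPair d a b) : (d : ℚ) ≠ 0 :=
  left_ne_zero_of_mul_eq_one h.mul_apply

theorem apply_ne_zero (h : IsHyperbolicPair d a b) : B a b ≠ 0 :=
  right_ne_zero_of_mul_eq_one h.mul_apply

theorem planeProj_left (halt : ∀ v, B v v = 0) (h : IsHyperbolicPair d a b) :
    planeProj B d a b a = a := by
  simp [planeProj, halt, bilin_antisymm B halt b a, ← Nat.cast_smul_eq_nsmul ℚ, smul_smul,
    mul_comm, h.mul_apply]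

theorem planeProj_right (halt : ∀ v, B v v = 0) (h : IsHyperbolicPair d a b) :
    planeProj B d a b b = b := by
  simp [planeProj, halt, ← Nat.cast_smul_eq_nsmul ℚ, smul_smul, mul_comm, h.mul_apply]

theorem apply_left_planeProj (halt : ∀ v, B v v = 0) (h : IsHyperbolicPair d a b) (y : V) :
    B a (planeProj B d a b y) = B a y := by
  simp [planeProj, halt, h.mul_apply]

theorem apply_right_planeProj (halt : ∀ v, B v v = 0) (h : IsHyperbolicPair d a b) (y : V) :
    B b (planeProj B d a b y) = B b y := by
  simp [planeProj, halt, bilin_antisymm B halt b a, h.mul_apply]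

theorem planeProj_mem_of_mem {y : V} (hy : y ∈ L) :
    planeProj B d a b y ∈ span ℤ {d • (a : V), d • (b : V)} :=
  sub_mem (apply_smul_mem a.2 hy (mem_span_of_mem (by simp)))
    (apply_smul_mem b.2 hy (mem_span_of_mem (by simp)))

theorem planeProj_mem_of_mem_dualLattice (halt : ∀ v, B v v = 0) (h : IsHyperbolicPair d a b)
    {y : V} (hy : y ∈ dualLattice B L) : planeProj B d a b y ∈ span ℤ {(a : V), (b : V)} := by
  set N := span ℤ {(a : V), (b : V)}
  have haN : (a : V) ∈ N := mem_span_of_mem (Or.inl rfl)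
  have hbN : (b : V) ∈ N := mem_span_of_mem (Or.inr rfl)
  convert sub_mem (apply_smul_mem hy h.nsmul_right_mem haN)
    (apply_smul_mem hy h.nsmul_left_mem hbN) using 1
  simp only [planeProj, LinearMap.sub_apply, LinearMap.smulRight_apply, LinearMap.smul_apply,
    bilin_antisymm B halt y, map_nsmul, nsmul_eq_mul]
  module

theorem isSplitVec (halt : ∀ v, B v v = 0) (h : IsHyperbolicPair d a b) :
    IsSplitVec B L (d • (a : V)) := by
  let P := span ℤ {d • (a : V), d • (b : V)}
  have hPL : P ≤ L := span_le.mpr (Set.pair_subset h.nsmul_left_mem h.nsmul_right_mem)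
  have hrank : Module.finrank ℤ P = 2 := by
    have hindep : LinearIndependent ℤ ![d • (a : V), d • (b : V)] := by
      refine (linearIndependent_pair_of_apply_ne_zero (B := B) halt ?_).restrict_scalars' ℤ
      simp [h.apply_ne_zero, h.natCast_ne_zero]
    have := finrank_span_eq_card hindep
    rwa [Matrix.range_cons_cons_empty, Fintype.card_fin] at this
  refine ⟨P, mem_span_of_mem (by simp), hPL, hrank, le_antisymm ?_ ?_, ?_⟩
  · exact sup_le hPL fun z hz => hz.1
  · intro y hy
    have hproj : planeProj B d a b y ∈ P := planeProj_mem_of_mem hy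
    rw [← add_sub_cancel (planeProj B d a b y) y]
    refine add_mem_sup hproj ⟨sub_mem hy (hPL hproj), fun z hz => ?_⟩
    obtain ⟨s, t, rfl⟩ := mem_span_pair.mp hz
    rw [bilin_antisymm B halt]
    simp [h.apply_left_planeProj halt, h.apply_right_planeProj halt]
  · rw [eq_bot_iff]
    rintro y ⟨hyP, -, hy⟩
    have hfix : planeProj B d a b y = y := by
      obtain ⟨s, t, rfl⟩ := mem_span_pair.mp hyP
      simp [h.planeProj_left halt, h.planeProj_right halt]
    have hya : B a y = 0 := by
      simpa [h.natCast_ne_zero, bilin_antisymm B halt y] using hy _ (mem_span_of_mem (Or.inl rfl))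
    have hyb : B b y = 0 := by
      simpa [h.natCast_ne_zero, bilin_antisymm B halt y] using hy _ (mem_span_of_mem (Or.inr rfl))
    rw [mem_bot, ← hfix]
    simp [planeProj, hya, hyb]

theorem nsmul_discCls_left (h : IsHyperbolicPair d a b) : d • discCls B L a = 0 :=
  nsmul_discCls_eq_zero_iff.mpr h.nsmul_left_mem

theorem nsmul_discCls_right (h : IsHyperbolicPair d a b) : d • discCls B L b = 0 :=
  nsmul_discCls_eq_zero_iff.mpr h.nsmul_right_mem

theorem dvd_of_discForm_right_eq_zero (h : IsHyperbolicPair d a b) {s t : ℤ}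
    (hst : discForm B L halt (s • discCls B L a + t • discCls B L b) (discCls B L b) = 0) :
    (d : ℤ) ∣ s := by
  obtain ⟨n, hn⟩ := (discForm_discCls_eq_zero_iff (a := s • a + t • b)).mp hst
  refine ⟨n, ?_⟩
  have hsn : s * B a b = n := by simpa [halt] using hn
  have : (s : ℚ) = d * n := by linear_combination d * hsn - s * h.mul_apply
  exact_mod_cast this

theorem dvd_of_discForm_left_eq_zero (h : IsHyperbolicPair d a b) {s t : ℤ}
    (hst : discForm B L halt (s • discCls B L a + t • discCls B L b) (discCls B L a) = 0) :
    (d : ℤ) ∣ t := by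
  obtain ⟨n, hn⟩ := (discForm_discCls_eq_zero_iff (a := s • a + t • b)).mp hst
  refine ⟨-n, ?_⟩
  have htn : -(t * B a b) = n := by simpa [halt, bilin_antisymm B halt b a] using hn
  have : (t : ℚ) = d * (-n) := by linear_combination -d * htn - t * h.mul_apply
  exact_mod_cast this

theorem addOrderOf_discCls_left (halt : ∀ v, B v v = 0) (h : IsHyperbolicPair d a b) :
    addOrderOf (discCls B L a) = d := by
  refine Nat.dvd_antisymm (addOrderOf_dvd_of_nsmul_eq_zero h.nsmul_discCls_left) ?_
  have hk := h.dvd_of_discForm_right_eq_zero (halt := halt) (s := addOrderOf (discCls B L a))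
    (t := 0) (by simp)
  exact_mod_cast hk

theorem sup_discOrth_eq_top (h : IsHyperbolicPair d a b) :
    span ℤ {discCls B L a, discCls B L b} ⊔
      discOrth B L halt (span ℤ {discCls B L a, discCls B L b}) = ⊤ := by
  rw [eq_top_iff]
  rintro y -
  obtain ⟨y, rfl⟩ := Submodule.Quotient.mk_surjective _ y
  obtain ⟨s, t, hst⟩ := mem_span_pair.mp (h.planeProj_mem_of_mem_dualLattice halt y.2)
  let p : dualLattice B L := s • a + t • b
  have hp : (p : V) = planeProj B d a b y := hst
  refine mem_sup.mpr ⟨discCls B L p, mem_span_pair.mpr ⟨s, t, rfl⟩, discCls B L (y - p), ?_,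
    congrArg (discCls B L) (add_sub_cancel p y)⟩
  rw [mem_discOrth_iff_le_ker, span_le]
  refine Set.pair_subset (discForm_discCls_eq_zero_iff.mpr ⟨0, ?_⟩)
    (discForm_discCls_eq_zero_iff.mpr ⟨0, ?_⟩) <;> rw [bilin_antisymm B halt]
  · simp [hp, h.apply_left_planeProj halt]
  · simp [hp, h.apply_right_planeProj halt]

theorem inf_discOrth_eq_bot (h : IsHyperbolicPair d a b) :
    span ℤ {discCls B L a, discCls B L b} ⊓
      discOrth B L halt (span ℤ {discCls B L a, discCls B L b}) = ⊥ := by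
  rw [eq_bot_iff]
  rintro z ⟨hz, horth⟩
  obtain ⟨s, t, rfl⟩ := mem_span_pair.mp hz
  rw [SetLike.mem_coe, mem_discOrth_iff_le_ker, span_le, Set.pair_subset_iff] at horth
  obtain ⟨k, rfl⟩ := h.dvd_of_discForm_right_eq_zero horth.2
  obtain ⟨l, rfl⟩ := h.dvd_of_discForm_left_eq_zero horth.1
  simp [mul_comm (d : ℤ), mul_smul, h.nsmul_discCls_left, h.nsmul_discCls_right]

theorem isSplitElem (h : IsHyperbolicPair d a b) : IsSplitElem B L halt (discCls B L a) := by
  refine ⟨span ℤ {discCls B L a, discCls B L b}, mem_span_of_mem (Or.inl rfl), ?_,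
    h.sup_discOrth_eq_top, h.inf_discOrth_eq_bot⟩
  rw [h.addOrderOf_discCls_left halt]
  refine nonempty_span_pair_addEquiv_zmod_prod h.nsmul_discCls_left h.nsmul_discCls_right
    fun s t hst => ⟨?_, ?_⟩
  · exact h.dvd_of_discForm_right_eq_zero (halt := halt) (by rw [hst]; simp)
  · exact h.dvd_of_discForm_left_eq_zero (halt := halt) (by rw [hst]; simp)

end IsHyperbolicPair

/-! ### The splitting criterion -/

/-- Some `x ∈ L` has `(u, x) = 1`. For `u` in the dual lattice this means `(u, L) = ℤ`; it is the
condition under which `u` can play the role of `v* = v / div v` for a primitive `v`. -/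
def IsUnimodularVec (B : V →ₗ[ℚ] V →ₗ[ℚ] ℚ) (L : Submodule ℤ V) (u : V) : Prop :=
  ∃ x ∈ L, B u x = 1

theorem nsmul_vstar {d : ℕ} (hd : d ≠ 0) (v : V) : d • vstar v d = v := by
  rw [vstar, ← Nat.cast_smul_eq_nsmul ℚ, smul_inv_smul₀ (Nat.cast_ne_zero.mpr hd)]

theorem vstar_nsmul {d : ℕ} (hd : d ≠ 0) (v : V) : vstar (d • v) d = v := by
  rw [vstar, ← Nat.cast_smul_eq_nsmul ℚ, inv_smul_smul₀ (Nat.cast_ne_zero.mpr hd)]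

theorem HasDiv.isUnimodularVec_vstar {v : V} {d : ℕ} (hd : HasDiv B L v d) :
    IsUnimodularVec B L (vstar v d) := by
  obtain ⟨hpos, -, x, hx, hvx⟩ := hd
  have : (d : ℚ) ≠ 0 := Nat.cast_ne_zero.mpr hpos.ne'
  exact ⟨x, hx, by simp [vstar, hvx, this]⟩

theorem HasDiv.ne_zero {v : V} {d : ℕ} (hd : HasDiv B L v d) : v ≠ 0 := by
  rintro rfl
  obtain ⟨hpos, -, x, -, hvx⟩ := hd
  simp [eq_comm, hpos.ne'] at hvx

theorem IsPrimitive.exists_zsmul_eq {v : V} (hv : IsPrimitive L v) {q : ℚ} (hq : q • v ∈ L) :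
    ∃ n : ℤ, n • v = q • v := by
  rw [← mem_span_singleton, ← hv.2]
  exact ⟨smul_mem _ q (mem_span_singleton_self v), hq⟩

theorem nsmul_vstar_mem_iff {v : V} {d k : ℕ} (hv : IsPrimitive L v) (hd : HasDiv B L v d) :
    k • vstar v d ∈ L ↔ d ∣ k := by
  have hd0 : (d : ℚ) ≠ 0 := Nat.cast_ne_zero.mpr hd.1.ne'
  constructor
  · intro hk
    rw [← Nat.cast_smul_eq_nsmul ℚ, vstar, smul_smul] at hk
    obtain ⟨n, hn⟩ := hv.exists_zsmul_eq hk
    rw [← Int.cast_smul_eq_zsmul ℚ] at hn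
    have hkn : (k : ℚ) = d * n := by
      rw [smul_left_injective ℚ hd.ne_zero hn]
      field_simp
    exact Int.natCast_dvd_natCast.mp ⟨n, by exact_mod_cast hkn⟩
  · rintro ⟨m, rfl⟩
    rw [mul_comm, mul_smul, nsmul_vstar hd.1.ne']
    exact nsmul_mem hv.1 m

theorem addOrderOf_discCls_vstar {v : V} {d : ℕ} (hv : IsPrimitive L v) (hd : HasDiv B L v d) :
    addOrderOf (discCls B L ⟨vstar v d, vstar_mem hd⟩) = d :=
  Nat.dvd_right_iff_eq.mp fun k => by
    rw [addOrderOf_dvd_iff_nsmul_eq_zero, nsmul_discCls_eq_zero_iff, nsmul_vstar_mem_iff hv hd]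

theorem exists_apply_eq_mul_of_finrank_eq_two (halt : ∀ v, B v v = 0) {M : Submodule ℤ V}
    (hM : Module.finrank ℤ M = 2) (hML : M ≤ L) {v w y : V} {d : ℕ} (hv : IsPrimitive L v)
    (hd : HasDiv B L v d) (hvM : v ∈ M) (hwM : w ∈ M) (hvw : B v w = d) (hy : y ∈ M) :
    ∃ n : ℤ, B w y = n * d := by
  have hd0 : (d : ℚ) ≠ 0 := Nat.cast_ne_zero.mpr hd.1.ne'
  have hindep := linearIndependent_pair_of_apply_ne_zero halt (hvw ▸ hd0)
  obtain ⟨s, t, rfl⟩ := mem_span_pair.mp <|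
    mem_span_pair_of_finrank_eq_two hM hvM hwM hy hindep
  obtain ⟨n, hn⟩ := hd.2.1 _ (hML hy)
  have htn : t = n := by simpa [halt, hvw, hd0] using hn
  have hsv : s • v ∈ L := by
    have := sub_mem hy (M.smul_mem n hwM)
    rw [htn, Int.cast_smul_eq_zsmul, add_sub_cancel_right] at this
    exact hML this
  obtain ⟨m, hm⟩ := hv.exists_zsmul_eq hsv
  exact ⟨-m, by simp [← hm, halt, bilin_antisymm B halt w v, hvw]⟩

theorem IsSplitVec.exists_isHyperbolicPair {v : V} {d : ℕ} (halt : ∀ v, B v v = 0)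
    (hv : IsPrimitive L v) (hd : HasDiv B L v d) (hs : IsSplitVec B L v) :
    ∃ b, IsHyperbolicPair d ⟨vstar v d, vstar_mem hd⟩ b := by
  obtain ⟨M, hvM, hML, hrank, hsup, -⟩ := hs
  have hd0 : (d : ℚ) ≠ 0 := Nat.cast_ne_zero.mpr hd.1.ne'
  have horth {z : V} (hz : z ∈ orthCompIn B L M) {y : V} (hy : y ∈ M) : B y z = 0 := by
    rw [bilin_antisymm B halt, hz.2 y hy, neg_zero]
  obtain ⟨w, hwM, hvw⟩ : ∃ w ∈ M, B v w = d := by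
    obtain ⟨x, hx, hvx⟩ := hd.2.2
    obtain ⟨w, hw, z, hz, rfl⟩ := mem_sup.mp (hsup.ge hx)
    exact ⟨w, hw, by simpa [horth hz hvM] using hvx⟩
  have hwdual : (d : ℚ)⁻¹ • w ∈ dualLattice B L := by
    intro x hx
    obtain ⟨y, hy, z, hz, rfl⟩ := mem_sup.mp (hsup.ge hx)
    obtain ⟨n, hn⟩ := exists_apply_eq_mul_of_finrank_eq_two halt hrank hML hv hd hvM hwM hvw hy
    refine ⟨n, ?_⟩
    rw [map_smul, LinearMap.smul_apply, map_add, hn, horth hz hwM, add_zero, smul_eq_mul]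
    field_simp
  refine ⟨⟨_, hwdual⟩, ?_, ?_, ?_⟩
  · change d • vstar v d ∈ L
    rw [nsmul_vstar hd.1.ne']
    exact hv.1
  · rw [← Nat.cast_smul_eq_nsmul ℚ, smul_inv_smul₀ hd0]
    exact hML hwM
  · simp only [vstar, map_smul, LinearMap.smul_apply, hvw, smul_eq_mul]
    field_simp

/-- The values of `(d • a, ·)` on lifts of elements of `D'` form an ideal containing `d`. If `k`
maps this ideal into `d ℤ`, then `k • [a] ∈ D' ∩ D'^⊥ = 0` and `d ∣ k`; hence the ideal is `ℤ`. -/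
theorem exists_addOrderOf_mul_apply_eq_one {halt : ∀ v, B v v = 0} (hL : L ≤ dualLattice B L)
    {D' : Submodule ℤ (DiscGroup B L)} (hinf : D' ⊓ discOrth B L halt D' = ⊥)
    {a : dualLattice B L} (ha : IsUnimodularVec B L a) (haD : discCls B L a ∈ D')
    (hfin : IsOfFinAddOrder (discCls B L a)) :
    ∃ b, discCls B L b ∈ D' ∧ addOrderOf (discCls B L a) * B a b = 1 := by
  have hda := nsmul_discCls_eq_zero_iff.mp (addOrderOf_nsmul_eq_zero (discCls B L a))
  have hd0 := hfin.addOrderOf_pos.ne'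
  set d := addOrderOf (discCls B L a)
  let φ : dualLattice B L →ₗ[ℤ] ℚ :=
    (((d : ℚ) • B a).restrictScalars ℤ).comp (dualLattice B L).subtype
  let I : Ideal ℤ := ((D'.comap (mkQ _)).map φ).comap (Algebra.linearMap ℤ ℚ)
  have mem_I {m : ℤ} : m ∈ I ↔ ∃ b, discCls B L b ∈ D' ∧ d * B a b = m := Iff.rfl
  have hdI : (d : ℤ) ∈ I := by
    obtain ⟨x, hx, hax⟩ := ha
    have hx0 : discCls B L ⟨x, hL hx⟩ = 0 := discCls_eq_zero_iff.mpr hx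
    exact mem_I.mpr ⟨⟨x, hL hx⟩, hx0 ▸ zero_mem D', by simp [hax]⟩
  have hI : I = ⊤ := by
    refine eq_top_of_forall_dvd_mul (by exact_mod_cast hd0) hdI fun k hk => ?_
    rw [addOrderOf_dvd_iff_zsmul_eq_zero, ← mem_bot ℤ, ← hinf]
    refine ⟨zsmul_mem haD k, mem_discOrth_iff_le_ker.mpr fun y hy => ?_⟩
    obtain ⟨b, rfl⟩ := Submodule.Quotient.mk_surjective _ y
    obtain ⟨m, hm⟩ := b.2 _ hda
    have hab : d * B a b = (-m : ℤ) := by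
      rw [bilin_antisymm B halt]
      simp [← hm]
    obtain ⟨l, hl⟩ := hk (-m) (mem_I.mpr ⟨b, hy, hab⟩)
    refine (discForm_discCls_eq_zero_iff (a := k • a)).mpr ⟨l, ?_⟩
    have hkl : d * (k * B a b) = d * (l : ℚ) := by
      rw [mul_left_comm, hab]
      exact_mod_cast hl
    simpa [hd0] using hkl
  obtain ⟨b, hbD, hb⟩ := mem_I.mp (hI ▸ mem_top : (1 : ℤ) ∈ I)
  exact ⟨b, hbD, by simpa using hb⟩

theorem IsSplitElem.exists_isHyperbolicPair {halt : ∀ v, B v v = 0} {a : dualLattice B L}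
    (hL : L ≤ dualLattice B L) (ha : IsUnimodularVec B L a)
    (hs : IsSplitElem B L halt (discCls B L a)) :
    ∃ b, IsHyperbolicPair (addOrderOf (discCls B L a)) a b := by
  have hfin := hs.isOfFinAddOrder
  obtain ⟨D', haD, ⟨e⟩, -, hinf⟩ := hs
  obtain ⟨b, hbD, hab⟩ := exists_addOrderOf_mul_apply_eq_one hL hinf ha haD hfin
  have htors (y : D') : addOrderOf (discCls B L a) • y = 0 := by
    apply e.injective
    simp [Prod.ext_iff]
  exact ⟨b, nsmul_discCls_eq_zero_iff.mp (addOrderOf_nsmul_eq_zero _),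
    nsmul_discCls_eq_zero_iff.mp (congrArg Subtype.val (htors ⟨_, hbD⟩)), hab⟩

theorem isSplitVec_iff_isSplitElem (halt : ∀ v, B v v = 0) (hL : L ≤ dualLattice B L) {v : V}
    {d : ℕ} (hv : IsPrimitive L v) (hd : HasDiv B L v d) :
    IsSplitVec B L v ↔ IsSplitElem B L halt (discCls B L ⟨vstar v d, vstar_mem hd⟩) := by
  constructor
  · intro h
    obtain ⟨b, hb⟩ := h.exists_isHyperbolicPair halt hv hd
    exact hb.isSplitElem
  · intro h
    obtain ⟨b, hb⟩ := h.exists_isHyperbolicPair hL hd.isUnimodularVec_vstar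
    simpa [addOrderOf_discCls_vstar hv hd, nsmul_vstar hd.1.ne'] using hb.isSplitVec halt

/-! ### The Eichler criterion -/

/-- `Γ_L`-equivalence of vectors: `u` and `w` lie in one orbit of the isometries of `L` that act
trivially on the discriminant group. -/
def GammaEquiv (B : V →ₗ[ℚ] V →ₗ[ℚ] ℚ) (L : Submodule ℤ V) (u w : V) : Prop :=
  ∃ γ : V ≃ₗ[ℚ] V, InGamma B L γ ∧ γ u = w

namespace GammaEquiv

variable {u v w : V}

theorem refl (u : V) : GammaEquiv B L u u :=
  ⟨.refl ℚ V, ⟨⟨fun _ => .rfl, fun _ _ => rfl⟩, fun _ _ => by simp⟩, rfl⟩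

theorem symm : GammaEquiv B L u w → GammaEquiv B L w u := by
  rintro ⟨γ, ⟨⟨hL, hB⟩, hD⟩, rfl⟩
  have hiso : IsIsometry B L γ.symm :=
    ⟨fun x => by simp [hL (γ.symm x)], fun x y => by simp [← hB (γ.symm x)]⟩
  refine ⟨γ.symm, ⟨hiso, fun x hx => ?_⟩, γ.symm_apply_apply u⟩
  simpa using neg_mem (hD _ (isometry_dual_mem hiso hx))

theorem trans : GammaEquiv B L u v → GammaEquiv B L v w → GammaEquiv B L u w := by
  rintro ⟨γ, ⟨hγ, hγD⟩, rfl⟩ ⟨δ, ⟨hδ, hδD⟩, rfl⟩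
  refine ⟨γ.trans δ, ⟨⟨fun x => (hγ.1 x).trans (hδ.1 _), fun x y => ?_⟩, fun x hx => ?_⟩, rfl⟩
  · simp [hγ.2, hδ.2]
  · simpa using add_mem (hδD _ (isometry_dual_mem hγ hx)) (hγD x hx)

theorem smul (q : ℚ) : GammaEquiv B L u w → GammaEquiv B L (q • u) (q • w) := by
  rintro ⟨γ, hγ, rfl⟩
  exact ⟨γ, hγ, map_smul γ q u⟩

theorem sub_mem (hu : u ∈ dualLattice B L) : GammaEquiv B L u w → w - u ∈ L := by
  rintro ⟨γ, hγ, rfl⟩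
  exact hγ.2 u hu

theorem mem_dualLattice (hu : u ∈ dualLattice B L) : GammaEquiv B L u w → w ∈ dualLattice B L := by
  rintro ⟨γ, hγ, rfl⟩
  exact isometry_dual_mem hγ.1 hu

theorem isUnimodularVec (hu : IsUnimodularVec B L u) :
    GammaEquiv B L u w → IsUnimodularVec B L w := by
  rintro ⟨γ, ⟨⟨hL, hB⟩, -⟩, rfl⟩
  obtain ⟨x, hx, hux⟩ := hu
  exact ⟨γ x, (hL x).mp hx, (hB u x).trans hux⟩

theorem hasDiv {d : ℕ} (hd : HasDiv B L u d) : GammaEquiv B L u w → HasDiv B L w d := by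
  rintro ⟨γ, ⟨⟨hL, hB⟩, -⟩, rfl⟩
  obtain ⟨hpos, hdvd, x, hx, hux⟩ := hd
  refine ⟨hpos, fun y hy => ?_, γ x, (hL x).mp hx, (hB u x).trans hux⟩
  rw [← γ.apply_symm_apply y] at hy ⊢
  rw [hB]
  exact hdvd _ ((hL _).mpr hy)

end GammaEquiv

theorem HasDiv.unique {v : V} {d d' : ℕ} (h : HasDiv B L v d) (h' : HasDiv B L v d') : d = d' := by
  have dvd {m n : ℕ} (hm : HasDiv B L v m) (hn : HasDiv B L v n) : m ∣ n := by
    obtain ⟨x, hx, hvx⟩ := hn.2.2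
    obtain ⟨k, hk⟩ := hm.2.1 x hx
    refine Int.natCast_dvd_natCast.mp ⟨k, ?_⟩
    rw [hvx, mul_comm] at hk
    exact_mod_cast hk
  exact Nat.dvd_antisymm (dvd h h') (dvd h' h)

theorem gammaEquiv_add_smul (halt : ∀ v, B v v = 0) (hL : L ≤ dualLattice B L) {l : V}
    (hl : l ∈ L) (c : ℤ) (u : V) : GammaEquiv B L u (u + (c * B l u) • l) := by
  have h0 : ((c : ℚ) • B l) l = 0 := by simp [halt]
  let γ := LinearEquiv.transvection h0
  have hγ (x : V) : γ x = x + (c * B l x) • l := rfl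
  have hlγ (x : V) : B l (γ x) = B l x := by simp [hγ, halt]
  have hmem {x : V} (hx : x ∈ dualLattice B L) : (c * B l x) • l ∈ L := by
    have := L.smul_mem (-c) (apply_smul_mem hx hl hl)
    rwa [neg_smul, ← smul_neg, ← neg_smul, ← bilin_antisymm B halt, ← Int.cast_smul_eq_zsmul ℚ,
      smul_smul] at this
  refine ⟨γ, ⟨⟨fun x => ⟨fun hx => ?_, fun hx => ?_⟩, fun x y => ?_⟩, fun x hx => ?_⟩, rfl⟩
  · exact add_mem hx (hmem (hL hx))
  · have := hmem (hL hx)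
    rw [hlγ] at this
    simpa [hγ] using sub_mem hx this
  · simp only [hγ, map_add, map_smul, LinearMap.add_apply, LinearMap.smul_apply, smul_eq_mul, halt,
      bilin_antisymm B halt x l]
    ring
  · simpa [hγ] using hmem hx

theorem gammaEquiv_add (halt : ∀ v, B v v = 0) (hL : L ≤ dualLattice B L) {l u : V}
    (hl : l ∈ L) (hlu : B l u = 1) : GammaEquiv B L u (u + l) := by
  simpa [hlu] using gammaEquiv_add_smul halt hL hl 1 u

section HyperbolicPlane

variable {e f : V}

/-- One division step of the Euclidean algorithm on the pair `(B u f, B u e)`. -/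
theorem exists_gammaEquiv_apply_eq_emod (halt : ∀ v, B v v = 0) (hL : L ≤ dualLattice B L)
    (he : e ∈ L) (hf : f ∈ L) (hef : B e f = 1) {u : V} {m n : ℤ} (hm : B u f = m)
    (hn : B u e = n) : ∃ w, GammaEquiv B L u w ∧ B w f = (n % m : ℤ) := by
  have hfu : B f u = -m := by rw [bilin_antisymm B halt, hm]
  have heu : B e u = -n := by rw [bilin_antisymm B halt, hn]
  let u₁ := u + ((-(n / m) - 1 : ℤ) * B f u) • f
  have hu₁f : B u₁ f = m := by simp [u₁, halt, hm]
  have hu₁e : B e u₁ = m - (n % m : ℤ) := by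
    simp only [u₁, map_add, map_smul, smul_eq_mul, heu, hfu, hef, Int.emod_def]
    push_cast
    ring
  exact ⟨_, (gammaEquiv_add_smul halt hL hf _ u).trans (gammaEquiv_add_smul halt hL he (-1) u₁),
    by simp [hu₁f, hu₁e, hef]⟩

theorem exists_gammaEquiv_apply_eq_zero (halt : ∀ v, B v v = 0) (hL : L ≤ dualLattice B L)
    (he : e ∈ L) (hf : f ∈ L) (hef : B e f = 1) {u : V} (hu : u ∈ dualLattice B L) :
    ∃ w, GammaEquiv B L u w ∧ B w f = 0 := by
  obtain ⟨m, hm⟩ := hu f hf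
  induction hk : m.natAbs using Nat.strong_induction_on generalizing u m with
  | _ k ih =>
    obtain rfl | hm0 := eq_or_ne m 0
    · exact ⟨u, .refl u, by simpa using hm⟩
    obtain ⟨n, hn⟩ := hu e he
    obtain ⟨u', huu', hu'⟩ := exists_gammaEquiv_apply_eq_emod halt hL he hf hef hm hn
    have hlt : (n % m).natAbs < k := by
      have := Int.emod_nonneg n hm0
      have := Int.emod_lt n hm0
      omega
    obtain ⟨w, hw, hwf⟩ := ih _ hlt (huu'.mem_dualLattice hu) _ hu' rfl
    exact ⟨w, huu'.trans hw, hwf⟩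

/-- Once `B u f = 0`, adding `a := (2 - B e u + B e x) • f - x`, where `B u x = 1`, and then
`e - a` are both transvections. -/
theorem exists_gammaEquiv_apply_eq_one (halt : ∀ v, B v v = 0) (hL : L ≤ dualLattice B L)
    (he : e ∈ L) (hf : f ∈ L) (hef : B e f = 1) {u : V} (hu : u ∈ dualLattice B L)
    (hu1 : IsUnimodularVec B L u) : ∃ w, GammaEquiv B L u w ∧ B w f = 1 := by
  obtain ⟨v, huv, hvf⟩ := exists_gammaEquiv_apply_eq_zero halt hL he hf hef hu
  obtain ⟨x, hx, hvx⟩ := huv.isUnimodularVec hu1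
  obtain ⟨n, hn⟩ := huv.mem_dualLattice hu e he
  obtain ⟨m, hm⟩ := hL he x hx
  let a := (2 + n + m) • f - x
  have ha : a ∈ L := sub_mem (L.smul_mem _ hf) hx
  have hav : B a v = 1 := by simp [a, bilin_antisymm B halt _ v, hvf, hvx]
  have hev : B e v = -n := by rw [bilin_antisymm B halt, hn]
  have hea : B e a = 2 + n := by simp [a, hef, hm]
  have heav : B (e - a) (v + a) = 1 :=
    calc B (e - a) (v + a) = B e v + B e a - B a v := by simp [halt]
      _ = 1 := by rw [hev, hea, hav]; ring
  have hadd := (gammaEquiv_add halt hL ha hav).trans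
    (gammaEquiv_add halt hL (sub_mem he ha) heav)
  rw [add_assoc, add_sub_cancel] at hadd
  exact ⟨v + e, huv.trans hadd, by simp [hvf, hef]⟩

theorem gammaEquiv_of_apply_eq_one (halt : ∀ v, B v v = 0) (hL : L ≤ dualLattice B L)
    (hf : f ∈ L) {u w : V} (hu : u ∈ dualLattice B L) (huf : B u f = 1) (hwf : B w f = 1)
    (huw : w - u ∈ L) : GammaEquiv B L u w := by
  obtain ⟨n, hn⟩ := hu _ huw
  let l := w - u - (n + 1) • f
  have hl : l ∈ L := sub_mem huw (L.smul_mem _ hf)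
  have hlu : B l u = 1 := by
    rw [bilin_antisymm B halt]
    simp [l, -map_sub, map_sub (B u) _ ((n + 1) • f), hn, huf]
  have hfw : B f w = -1 := by rw [bilin_antisymm B halt, hwf]
  have hstep : GammaEquiv B L w (u + l) := by
    convert gammaEquiv_add_smul halt hL hf (n + 1) w using 1
    simp only [l, hfw]
    push_cast
    module
  exact (gammaEquiv_add halt hL hl hlu).trans hstep.symm

theorem gammaEquiv_of_sub_mem (halt : ∀ v, B v v = 0) (hL : L ≤ dualLattice B L)
    (he : e ∈ L) (hf : f ∈ L) (hef : B e f = 1) {u w : V} (hu : u ∈ dualLattice B L)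
    (hw : w ∈ dualLattice B L) (hu1 : IsUnimodularVec B L u) (hw1 : IsUnimodularVec B L w)
    (huw : w - u ∈ L) : GammaEquiv B L u w := by
  obtain ⟨u', huu', hu'f⟩ := exists_gammaEquiv_apply_eq_one halt hL he hf hef hu hu1
  obtain ⟨w', hww', hw'f⟩ := exists_gammaEquiv_apply_eq_one halt hL he hf hef hw hw1
  have hsub : w' - u' ∈ L := by
    convert sub_mem (add_mem (hww'.sub_mem hw) huw) (huu'.sub_mem hu) using 1
    abel
  exact (huu'.trans (gammaEquiv_of_apply_eq_one halt hL hf (huu'.mem_dualLattice hu) hu'f hw'f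
    hsub)).trans hww'.symm

theorem gammaEquiv_iff_discCls_vstar_eq (halt : ∀ v, B v v = 0) (hL : L ≤ dualLattice B L)
    (he : e ∈ L) (hf : f ∈ L) (hef : B e f = 1) {v w : V} {d d' : ℕ} (hv : IsPrimitive L v)
    (hw : IsPrimitive L w) (hvd : HasDiv B L v d) (hwd : HasDiv B L w d') :
    GammaEquiv B L v w ↔ discCls B L ⟨vstar v d, vstar_mem hvd⟩ =
      discCls B L ⟨vstar w d', vstar_mem hwd⟩ := by
  constructor
  · intro h
    obtain rfl := (h.hasDiv hvd).unique hwd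
    exact (discCls_eq_iff.mpr ((h.smul _).sub_mem (vstar_mem hvd))).symm
  · intro h
    obtain rfl : d = d' := by
      rw [← addOrderOf_discCls_vstar hv hvd, h, addOrderOf_discCls_vstar hw hwd]
    have := (gammaEquiv_of_sub_mem halt hL he hf hef (vstar_mem hvd) (vstar_mem hwd)
      hvd.isUnimodularVec_vstar hwd.isUnimodularVec_vstar (discCls_eq_iff.mp h.symm)).smul d
    simpa [Nat.cast_smul_eq_nsmul, nsmul_vstar hvd.1.ne', nsmul_vstar hwd.1.ne'] using this

end HyperbolicPlane

/-! ### Surjectivity -/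

theorem exists_discCls_eq_isUnimodularVec (hL : L ≤ dualLattice B L)
    {e f : V} (he : e ∈ L) (hf : f ∈ L) (hef : B e f = 1) (x : DiscGroup B L) :
    ∃ u, discCls B L u = x ∧ IsUnimodularVec B L (u : V) := by
  obtain ⟨c, rfl⟩ := Submodule.Quotient.mk_surjective _ x
  obtain ⟨n, hn⟩ := c.2 f hf
  have hne : (1 - n) • e ∈ L := L.smul_mem _ he
  refine ⟨c + ⟨(1 - n) • e, hL hne⟩, discCls_eq_iff.mpr ?_, f, hf, ?_⟩
  · simpa using hne
  · simp [hef, hn]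

section FiniteOrder

variable {a : dualLattice B L}

theorem hasDiv_addOrderOf_nsmul (ha : IsUnimodularVec B L a)
    (hfin : IsOfFinAddOrder (discCls B L a)) :
    HasDiv B L (addOrderOf (discCls B L a) • (a : V)) (addOrderOf (discCls B L a)) := by
  refine ⟨hfin.addOrderOf_pos, fun x hx => ?_, ?_⟩
  · obtain ⟨n, hn⟩ := a.2 x hx
    exact ⟨n, by simp [hn, mul_comm]⟩
  · obtain ⟨x, hx, hax⟩ := ha
    exact ⟨x, hx, by simp [hax]⟩

theorem isPrimitive_addOrderOf_nsmul (hL : L ≤ dualLattice B L) (ha : IsUnimodularVec B L a) :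
    IsPrimitive L (addOrderOf (discCls B L a) • (a : V)) := by
  have hv := nsmul_discCls_eq_zero_iff.mp (addOrderOf_nsmul_eq_zero (discCls B L a))
  refine ⟨hv, le_antisymm ?_ (le_inf ?_ ?_)⟩
  · rintro y ⟨hy, hyL⟩
    obtain ⟨q, rfl⟩ := mem_span_singleton.mp hy
    obtain ⟨x, hx, hax⟩ := ha
    obtain ⟨n, hn⟩ := hL hyL x hx
    have hqn : q * addOrderOf (discCls B L a) = n := by simpa [hax] using hn
    have hy : q • addOrderOf (discCls B L a) • (a : V) = n • (a : V) := by
      rw [← Nat.cast_smul_eq_nsmul ℚ, smul_smul, hqn, Int.cast_smul_eq_zsmul]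
    have hnL : n • (a : V) ∈ L := hy ▸ hyL
    have hn0 : n • discCls B L a = 0 := discCls_eq_zero_iff.mpr hnL
    obtain ⟨m, rfl⟩ := addOrderOf_dvd_iff_zsmul_eq_zero.mpr hn0
    refine mem_span_singleton.mpr ⟨m, ?_⟩
    rw [hy, mul_comm, mul_smul, natCast_zsmul]
  · exact span_le_restrictScalars ℤ ℚ _
  · exact span_le.mpr (Set.singleton_subset_iff.mpr hv)

end FiniteOrder

theorem splitting_criterion_general (halt : ∀ v, B v v = 0) (hL : L ≤ dualLattice B L) {e f : V}
    (he : e ∈ L) (hf : f ∈ L) (hef : B e f = 1) :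
    (∀ (v : V) (d : ℕ) (_ : IsPrimitive L v) (hd : HasDiv B L v d),
        IsSplitVec B L v ↔ IsSplitElem B L halt (discCls B L ⟨vstar v d, vstar_mem hd⟩)) ∧
    (∀ (v w : V) (dv dw : ℕ) (_ : IsPrimitive L v) (_ : IsPrimitive L w)
        (hdv : HasDiv B L v dv) (hdw : HasDiv B L w dw),
        GammaEquiv B L v w ↔
          discCls B L ⟨vstar v dv, vstar_mem hdv⟩ = discCls B L ⟨vstar w dw, vstar_mem hdw⟩) ∧
    (∀ x : DiscGroup B L, IsSplitElem B L halt x →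
      ∃ (v : V) (d : ℕ) (_ : IsPrimitive L v) (hd : HasDiv B L v d),
        IsSplitVec B L v ∧ discCls B L ⟨vstar v d, vstar_mem hd⟩ = x) := by
  refine ⟨fun v d hv hd => isSplitVec_iff_isSplitElem halt hL hv hd, fun v w dv dw hv hw hdv hdw =>
    gammaEquiv_iff_discCls_vstar_eq halt hL he hf hef hv hw hdv hdw, fun x hx => ?_⟩
  obtain ⟨u, rfl, hu⟩ := exists_discCls_eq_isUnimodularVec hL he hf hef x
  have hfin := hx.isOfFinAddOrder
  have hv := isPrimitive_addOrderOf_nsmul hL hu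
  have hd := hasDiv_addOrderOf_nsmul hu hfin
  have hstar : (⟨vstar _ _, vstar_mem hd⟩ : dualLattice B L) = u :=
    Subtype.ext (vstar_nsmul hfin.addOrderOf_pos.ne' _)
  refine ⟨_, _, hv, hd, (isSplitVec_iff_isSplitElem halt hL hv hd).mpr ?_, ?_⟩
  · rwa [hstar]
  · rw [hstar]

end

/-- **Splitting criterion.** If `Λ = U₁ ⊕ U₂ ⊕ Λ''`, a primitive vector `v` is
splitting iff `[v*] ∈ D_Λ` is splitting; hence `v ↦ [v*]` induces a bijection from
`Γ_Λ`-classes of splitting primitive vectors onto the splitting elements of `D_Λ`. -/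
theorem splitting_criterion
    (V : Type) [AddCommGroup V] [Module ℚ V]
    (B : V →ₗ[ℚ] V →ₗ[ℚ] ℚ)
    (halt : ∀ v, B v v = 0)
    (hnd : ∀ v : V, (∀ w, B v w = 0) → v = 0)
    (L : Submodule ℤ V) (hfg : L.FG)
    (hspan : Submodule.span ℚ (L : Set V) = ⊤)
    (hint : ∀ x ∈ L, ∀ y ∈ L, ∃ n : ℤ, B x y = (n : ℚ))
    (e₁ f₁ e₂ f₂ : V) (L'' : Submodule ℤ V)
    (hdec : OrthoDecompUU B L e₁ f₁ e₂ f₂ L'') :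
    (∀ (v : V) (d : ℕ) (hv : IsPrimitive L v) (hd : HasDiv B L v d),
        IsSplitVec B L v ↔
          IsSplitElem B L halt (discCls B L ⟨vstar v d, vstar_mem hd⟩)) ∧
    (∀ (v w : V) (dv dw : ℕ) (hv : IsPrimitive L v) (hw : IsPrimitive L w)
        (hdv : HasDiv B L v dv) (hdw : HasDiv B L w dw),
        IsSplitVec B L v → IsSplitVec B L w →
        ((∃ γ : V ≃ₗ[ℚ] V, InGamma B L γ ∧ γ v = w) ↔
          discCls B L ⟨vstar v dv, vstar_mem hdv⟩ =
            discCls B L ⟨vstar w dw, vstar_mem hdw⟩)) ∧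
    (∀ x : DiscGroup B L, IsSplitElem B L halt x →
      ∃ (v : V) (d : ℕ) (hv : IsPrimitive L v) (hd : HasDiv B L v d),
        IsSplitVec B L v ∧ discCls B L ⟨vstar v d, vstar_mem hd⟩ = x) := by
  obtain ⟨he, hf, -, -, -, hef, -⟩ := hdec
  obtain ⟨hsplit, hequiv, hsurj⟩ := splitting_criterion_general halt hint he hf hef
  exact ⟨hsplit, fun v w dv dw hv hw hdv hdw _ _ => hequiv v w dv dw hv hw hdv hdw, hsurj⟩
end

section
/- Let Λ = U ⊕ Λ' be a symplectic lattice with U spanned by e, f satisfying (e, f) = 1. Let v ∈ Λ' be primitive in Λ with div(v) = d, let y ∈ D_Λ be an element of order d with ([v*], y) = 1/d in ℚ/ℤ, and let w' ∈ (Λ')^∨ be a vector whose class in D_{Λ'} = D_Λ equals y. Write (v, dw') = d + αd² with α ∈ ℤ, and set w = dw' + αde ∈ Λ. Then w is a primitive vector of Λ with div(w) = d and (v + df, w) = d; in particular v + df is splitting. -/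
/-!
Set `u = v + df`, so that `w = d(w' + αe)`. Both `u/d = v* + f` and `w/d = w' + αe` lie in `Λ^∨`,
and the choice of `α` makes `(u, w) = d`. Hence `(u/d, ·)` is an integral functional on `Λ` with
value `1` at `w`, so `w` is primitive, while `(w, Λ) ⊆ dℤ` contains `(w, -u) = d`. Moreover
`Λ₁ = ℤu + ℤw` splits off, because the orthogonal projection `x ↦ (u/d, x) w - (w/d, x) u` onto
its rational span maps `Λ` into `Λ₁`.
-/

section AlternatingForm

variable {R M : Type*} [CommRing R] [NoZeroDivisors R] [AddCommGroup M] [Module R M]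
  {B : M →ₗ[R] M →ₗ[R] R} {u w : M}

lemma eq_zero_and_eq_zero_of_apply_smul_add_smul_eq_zero (hB : B.IsAlt) (huw : B u w ≠ 0) {s t : R}
    (hu : B (s • u + t • w) u = 0) (hw : B (s • u + t • w) w = 0) : s = 0 ∧ t = 0 := by
  have hwu : B w u ≠ 0 := by rwa [← hB.neg, neg_ne_zero]
  constructor
  · simpa [hB.self_eq_zero, huw] using hw
  · simpa [hB.self_eq_zero, hwu] using hu

lemma linearIndependent_pair_of_apply_ne_zero_s17 (hB : B.IsAlt) (huw : B u w ≠ 0) :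
    LinearIndependent R ![u, w] :=
  LinearIndependent.pair_iff.mpr fun s t h ↦
    eq_zero_and_eq_zero_of_apply_smul_add_smul_eq_zero hB huw (s := s) (t := t)
      (by simp [h]) (by simp [h])

end AlternatingForm

section RationalForm

variable {V : Type} [AddCommGroup V] [Module ℚ V] {B : V →ₗ[ℚ] V →ₗ[ℚ] ℚ} {L : Submodule ℤ V}
  {u v w x : V} {d : ℕ}

lemma vstar_add (v w : V) (d : ℕ) : vstar (v + w) d = vstar v d + vstar w d :=
  smul_add _ v w

lemma vstar_natCast_zsmul (hd : d ≠ 0) (v : V) : vstar ((d : ℤ) • v) d = v := by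
  rw [vstar, natCast_zsmul, ← Nat.cast_smul_eq_nsmul ℚ, inv_smul_smul₀ (Nat.cast_ne_zero.mpr hd)]

lemma apply_vstar (B : V →ₗ[ℚ] V →ₗ[ℚ] ℚ) (v x : V) (d : ℕ) :
    B (vstar v d) x = (d : ℚ)⁻¹ * B v x := by
  simp [vstar]

lemma hasDiv_of_vstar_mem_dualLattice (hd : 0 < d) (hv : vstar v d ∈ dualLattice B L) (hx : x ∈ L)
    (hvx : B v x = d) : HasDiv B L v d := by
  refine ⟨hd, fun z hz ↦ ?_, x, hx, hvx⟩
  obtain ⟨n, hn⟩ := hv z hz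
  have hd₀ : (d : ℚ) ≠ 0 := Nat.cast_ne_zero.mpr hd.ne'
  rw [apply_vstar, inv_mul_eq_iff_eq_mul₀ hd₀] at hn
  exact ⟨n, hn.trans (mul_comm _ _)⟩

lemma isPrimitive_of_apply_eq_one (hu : u ∈ dualLattice B L) (hw : w ∈ L) (huw : B u w = 1) :
    IsPrimitive L w := by
  refine ⟨hw, le_antisymm ?_ ?_⟩
  · rintro x ⟨hxw, hxL⟩
    obtain ⟨c, rfl⟩ := Submodule.mem_span_singleton.mp hxw
    obtain ⟨n, hn⟩ := hu _ hxL
    have hc : c = n := by simpa [huw] using hn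
    exact Submodule.mem_span_singleton.mpr ⟨n, by rw [hc, Int.cast_smul_eq_zsmul]⟩
  · rw [Submodule.span_singleton_le_iff_mem]
    exact ⟨Submodule.mem_span_singleton_self w, hw⟩

lemma finrank_span_pair_eq_two (hB : B.IsAlt) (huw : B u w ≠ 0) :
    Module.finrank ℤ (Submodule.span ℤ {u, w}) = 2 := by
  have hli : LinearIndependent ℤ ![u, w] :=
    (linearIndependent_pair_of_apply_ne_zero_s17 hB huw).restrict_scalars' ℤ
  rw [← Matrix.range_cons_cons_empty u w ![], finrank_span_eq_card hli, Fintype.card_fin]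

lemma mem_orthCompIn_span_pair_iff :
    x ∈ orthCompIn B L (Submodule.span ℤ {u, w}) ↔ x ∈ L ∧ B x u = 0 ∧ B x w = 0 := by
  refine and_congr_right fun _ ↦ ⟨fun h ↦ ?_, fun ⟨hu, hw⟩ y hy ↦ ?_⟩
  · exact ⟨h u (Submodule.mem_span_of_mem (by simp)), h w (Submodule.mem_span_of_mem (by simp))⟩
  · obtain ⟨a, b, rfl⟩ := Submodule.mem_span_pair.mp hy
    simp [hu, hw]

lemma span_pair_inf_orthCompIn_eq_bot (hB : B.IsAlt) (huw : B u w ≠ 0) :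
    Submodule.span ℤ {u, w} ⊓ orthCompIn B L (Submodule.span ℤ {u, w}) = ⊥ := by
  rw [eq_bot_iff]
  rintro x ⟨hx, hx_orth⟩
  obtain ⟨s, t, rfl⟩ := Submodule.mem_span_pair.mp hx
  obtain ⟨-, hu, hw⟩ := mem_orthCompIn_span_pair_iff.mp hx_orth
  simp only [← Int.cast_smul_eq_zsmul ℚ] at hu hw ⊢
  obtain ⟨hs, ht⟩ := eq_zero_and_eq_zero_of_apply_smul_add_smul_eq_zero hB huw hu hw
  simp [hs, ht]

lemma span_pair_sup_orthCompIn_eq (hB : B.IsAlt) (hd : d ≠ 0) (hu : u ∈ L) (hw : w ∈ L)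
    (hu_dual : vstar u d ∈ dualLattice B L) (hw_dual : vstar w d ∈ dualLattice B L)
    (huw : B u w = d) :
    Submodule.span ℤ {u, w} ⊔ orthCompIn B L (Submodule.span ℤ {u, w}) = L := by
  have hle : Submodule.span ℤ {u, w} ≤ L := Submodule.span_le.mpr (Set.pair_subset hu hw)
  refine le_antisymm (sup_le hle fun x hx ↦ hx.1) fun x hx ↦ ?_
  have hd₀ : (d : ℚ) ≠ 0 := Nat.cast_ne_zero.mpr hd
  obtain ⟨m, hm⟩ := hu_dual x hx
  obtain ⟨n, hn⟩ := hw_dual x hx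
  rw [apply_vstar, inv_mul_eq_iff_eq_mul₀ hd₀] at hm hn
  have hxu : B x u = -(d * m) := by rw [← hB.neg, hm]
  have hxw : B x w = -(d * n) := by rw [← hB.neg, hn]
  have hwu : B w u = -d := by rw [← hB.neg, huw]
  have hproj : -n • u + m • w ∈ Submodule.span ℤ {u, w} :=
    Submodule.mem_span_pair.mpr ⟨-n, m, rfl⟩
  refine Submodule.mem_sup.mpr ⟨_, hproj, x - (-n • u + m • w),
    mem_orthCompIn_span_pair_iff.mpr ⟨L.sub_mem hx (hle hproj), ?_, ?_⟩, add_sub_cancel _ _⟩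
  · simp [hB.self_eq_zero, hxu, hwu, mul_comm]
  · simp [hB.self_eq_zero, hxw, huw, mul_comm]

lemma isSplitVec_of_apply_eq (hB : B.IsAlt) (hd : d ≠ 0) (hu : u ∈ L) (hw : w ∈ L)
    (hu_dual : vstar u d ∈ dualLattice B L) (hw_dual : vstar w d ∈ dualLattice B L)
    (huw : B u w = d) :
    IsSplitVec B L u := by
  have huw₀ : B u w ≠ 0 := by rwa [huw, Nat.cast_ne_zero]
  exact ⟨Submodule.span ℤ {u, w}, Submodule.mem_span_of_mem (by simp),
    Submodule.span_le.mpr (Set.pair_subset hu hw), finrank_span_pair_eq_two hB huw₀,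
    span_pair_sup_orthCompIn_eq hB hd hu hw hu_dual hw_dual huw,
    span_pair_inf_orthCompIn_eq_bot hB huw₀⟩

lemma addOrderOf_discCls_dvd_iff (w : dualLattice B L) (n : ℤ) :
    (addOrderOf (discCls B L w) : ℤ) ∣ n ↔ n • (w : V) ∈ L := by
  rw [addOrderOf_dvd_iff_zsmul_eq_zero]
  exact Submodule.Quotient.mk_eq_zero _ (x := n • w)

lemma apply_add_zsmul_eq (hB : B.IsAlt) {e f w' : V} (hef : B e f = 1) (hev : B e v = 0)
    (hfw' : B f w' = 0) {α : ℤ} (hα : B v ((d : ℤ) • w') = (d : ℚ) + (α : ℚ) * (d : ℚ) ^ 2) :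
    B (v + (d : ℤ) • f) ((d : ℤ) • w' + (α * (d : ℤ)) • e) = d := by
  have hfe : B f e = -1 := by rw [← hB.neg, hef]
  have hve : B v e = 0 := by rw [← hB.neg, hev, neg_zero]
  calc B (v + (d : ℤ) • f) ((d : ℤ) • w' + (α * (d : ℤ)) • e)
    _ = B v ((d : ℤ) • w') + α * d * B v e + d * (d * B f w' + α * d * B f e) := by
      simp only [map_add, map_zsmul, LinearMap.add_apply, LinearMap.smul_apply, zsmul_eq_mul]
      push_cast
      ring
    _ = d := by rw [hα, hve, hfw', hfe]; ring

theorem splitting_partner_construction_general (hB : B.IsAlt) {e f : V} (he : e ∈ L) (hf : f ∈ L)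
    (he' : e ∈ dualLattice B L) (hf' : f ∈ dualLattice B L) (hef : B e f = 1)
    (hd : 0 < d) (hv : v ∈ L) (hv' : vstar v d ∈ dualLattice B L) (hev : B e v = 0)
    {w' : V} (hw' : w' ∈ dualLattice B L) (hdw' : (d : ℤ) • w' ∈ L) (hfw' : B f w' = 0)
    {α : ℤ} (hα : B v ((d : ℤ) • w') = (d : ℚ) + (α : ℚ) * (d : ℚ) ^ 2) :
    IsPrimitive L ((d : ℤ) • w' + (α * (d : ℤ)) • e) ∧
    HasDiv B L ((d : ℤ) • w' + (α * (d : ℤ)) • e) d ∧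
    B (v + (d : ℤ) • f) ((d : ℤ) • w' + (α * (d : ℤ)) • e) = (d : ℚ) ∧
    IsSplitVec B L (v + (d : ℤ) • f) := by
  have huw := apply_add_zsmul_eq hB hef hev hfw' hα
  set u := v + (d : ℤ) • f with hu_def
  set w := (d : ℤ) • w' + (α * (d : ℤ)) • e with hw_def
  have hu : u ∈ L := L.add_mem hv (L.smul_mem _ hf)
  have hw : w ∈ L := L.add_mem hdw' (L.smul_mem _ he)
  have hu_dual : vstar u d ∈ dualLattice B L := by
    rw [hu_def, vstar_add, vstar_natCast_zsmul hd.ne']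
    exact add_mem hv' hf'
  have hw_dual : vstar w d ∈ dualLattice B L := by
    rw [hw_def, mul_comm, mul_smul, ← smul_add, vstar_natCast_zsmul hd.ne']
    exact add_mem hw' (Submodule.smul_mem _ α he')
  have hu_dual_w : B (vstar u d) w = 1 := by
    rw [apply_vstar, huw, inv_mul_cancel₀ (Nat.cast_ne_zero.mpr hd.ne')]
  have hwu : B w (-u) = d := by rw [map_neg, hB.neg, huw]
  exact ⟨isPrimitive_of_apply_eq_one hu_dual hw hu_dual_w,
    hasDiv_of_vstar_mem_dualLattice hd hw_dual (L.neg_mem hu) hwu, huw,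
    isSplitVec_of_apply_eq hB hd.ne' hu hw hu_dual hw_dual huw⟩

end RationalForm

/-- Construction of a splitting partner (Claim 3.3): with `Λ = U ⊕ Λ'`, `v ∈ Λ'`
primitive of divisor `d`, `y ∈ D_Λ` of order `d` with `([v*], y) = 1/d`, `w' ∈ (Λ')^∨`
representing `y`, and `(v, dw') = d + αd²`, the vector `w = dw' + αde` is primitive with
`div(w) = d` and `(v + df, w) = d`; in particular `v + df` is splitting. -/
theorem splitting_partner_construction
    (V : Type) [AddCommGroup V] [Module ℚ V]
    (B : V →ₗ[ℚ] V →ₗ[ℚ] ℚ)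
    (halt : ∀ v, B v v = 0)
    (hnd : ∀ v : V, (∀ w, B v w = 0) → v = 0)
    (L : Submodule ℤ V) (hfg : L.FG)
    (hspan : Submodule.span ℚ (L : Set V) = ⊤)
    (hint : ∀ x ∈ L, ∀ y ∈ L, ∃ n : ℤ, B x y = (n : ℚ))
    (e f : V) (L' : Submodule ℤ V)
    (hdec : OrthoDecompU B L e f L')
    (v : V) (hv' : v ∈ L') (hv : IsPrimitive L v) (d : ℕ) (hd : HasDiv B L v d)
    (y : DiscGroup B L) (hyord : addOrderOf y = d)
    (hpair : discForm B L halt (discCls B L ⟨vstar v d, vstar_mem hd⟩) y =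
      ((((d : ℚ))⁻¹ : ℚ) : AddCircle (1 : ℚ)))
    (w' : V) (hw'mem : w' ∈ dualLattice B L) (hw'span : w' ∈ Submodule.span ℚ (L' : Set V))
    (hw'y : discCls B L ⟨w', hw'mem⟩ = y)
    (α : ℤ) (hα : B v ((d : ℤ) • w') = (d : ℚ) + (α : ℚ) * (d : ℚ) ^ 2) :
    IsPrimitive L ((d : ℤ) • w' + (α * (d : ℤ)) • e) ∧
    HasDiv B L ((d : ℤ) • w' + (α * (d : ℤ)) • e) d ∧
    B (v + (d : ℤ) • f) ((d : ℤ) • w' + (α * (d : ℤ)) • e) = (d : ℚ) ∧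
    IsSplitVec B L (v + (d : ℤ) • f) := by
  obtain ⟨he, hf, -, hef, horth, -⟩ := hdec
  have hdw' : (d : ℤ) • w' ∈ L :=
    (addOrderOf_discCls_dvd_iff ⟨w', hw'mem⟩ d).mp (by rw [hw'y, hyord])
  have hfw' : B f w' = 0 := LinearMap.eqOn_span (g := 0) (fun z hz ↦ (horth z hz).2) hw'span
  exact splitting_partner_construction_general halt he hf (hint e he) (hint f hf) hef hd.1 hv.1
    (vstar_mem hd) (horth v hv').1 hw'mem hdw' hfw' hα
end

section
/- Let p be a prime and let D = 𝒰(p^{e₁}) ⊕ ⋯ ⊕ 𝒰(p^{e_g}) be an orthogonal direct sum of finite symplectic groups 𝒰(p^{eᵢ}) with 0 ≤ e₁ ≤ ⋯ ≤ e_g. Write a nonzero element x ∈ D as x = Σᵢ xᵢ with xᵢ ∈ 𝒰(p^{eᵢ}), let p^{fᵢ} be the order of xᵢ and p^f = maxᵢ p^{fᵢ} the order of x. Then x is splitting if and only if there exists an index i such that fᵢ = f and fᵢ = eᵢ. -/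
noncomputable section

/-- The homomorphism `ℤ/n → ℚ/ℤ` sending `1` to `1/n`. -/
def uHom (n : ℕ) : ZMod n →+ AddCircle (1 : ℚ) :=
  ZMod.lift n ⟨zmultiplesHom _ ((((n : ℚ))⁻¹ : ℚ) : AddCircle (1 : ℚ)), by
    show ((n : ℤ)) • ((((n : ℚ))⁻¹ : ℚ) : AddCircle (1 : ℚ)) = 0
    rcases Nat.eq_zero_or_pos n with h | h
    · subst h; simp
    · have h1 : ((n : ℤ)) • ((((n : ℚ))⁻¹ : ℚ) : AddCircle (1 : ℚ))
          = ((((n : ℤ) • (((n : ℚ))⁻¹) : ℚ)) : AddCircle (1 : ℚ)) :=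
        (QuotientAddGroup.mk_zsmul (AddSubgroup.zmultiples (1 : ℚ)) _ _).symm
      rw [h1]
      have h2 : ((n : ℤ) • (((n : ℚ))⁻¹) : ℚ) = 1 := by
        rw [zsmul_eq_mul]
        push_cast
        field_simp
      rw [h2]
      exact (QuotientAddGroup.eq_zero_iff _).mpr ⟨1, by simp⟩⟩

/-- The nondegenerate `ℚ/ℤ`-valued alternating form on the finite symplectic group
`𝒰(n) = (ℤ/n) ⊕ (ℤ/n)`, `((a,b),(c,d)) ↦ (ad - bc)/n`. It is the discriminant form
of the scaled hyperbolic plane `U(n)`. -/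
def uForm (n : ℕ) (x y : ZMod n × ZMod n) : AddCircle (1 : ℚ) :=
  uHom n (x.1 * y.2 - x.2 * y.1)

lemma uForm_zero_left (n : ℕ) (y : ZMod n × ZMod n) : uForm n 0 y = 0 := by
  unfold uForm
  simp

lemma uForm_add_left (n : ℕ) (x x' y : ZMod n × ZMod n) :
    uForm n (x + x') y = uForm n x y + uForm n x' y := by
  unfold uForm
  rw [← map_add]
  congr 1
  simp only [Prod.fst_add, Prod.snd_add]
  ring

lemma uForm_neg_left (n : ℕ) (x y : ZMod n × ZMod n) :
    uForm n (-x) y = - uForm n x y := by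
  unfold uForm
  rw [← map_neg]
  congr 1
  simp only [Prod.fst_neg, Prod.snd_neg]
  ring

/-- The form on the orthogonal direct sum `𝒰(p^{e 1}) ⊕ ⋯ ⊕ 𝒰(p^{e g})`. -/
def totalForm (p : ℕ) {g : ℕ} (e : Fin g → ℕ)
    (x y : ∀ i, ZMod (p ^ e i) × ZMod (p ^ e i)) : AddCircle (1 : ℚ) :=
  ∑ i, uForm (p ^ e i) (x i) (y i)

/-- The orthogonal complement of a subgroup with respect to the form. -/
def orthU (p : ℕ) {g : ℕ} (e : Fin g → ℕ)
    (S : AddSubgroup (∀ i, ZMod (p ^ e i) × ZMod (p ^ e i))) :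
    AddSubgroup (∀ i, ZMod (p ^ e i) × ZMod (p ^ e i)) where
  carrier := {z | ∀ y ∈ S, totalForm p e z y = 0}
  zero_mem' := by
    intro y _
    unfold totalForm
    refine Finset.sum_eq_zero fun i _ => ?_
    have h0 : (0 : ∀ i, ZMod (p ^ e i) × ZMod (p ^ e i)) i = 0 := rfl
    rw [h0, uForm_zero_left]
  add_mem' := by
    intro a b ha hb y hy
    have hsum : totalForm p e (a + b) y = totalForm p e a y + totalForm p e b y := by
      unfold totalForm
      rw [← Finset.sum_add_distrib]
      refine Finset.sum_congr rfl fun i _ => ?_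
      have h0 : (a + b) i = a i + b i := rfl
      rw [h0, uForm_add_left]
    rw [hsum, ha y hy, hb y hy, add_zero]
  neg_mem' := by
    intro a ha y hy
    have hsum : totalForm p e (-a) y = - totalForm p e a y := by
      unfold totalForm
      rw [← Finset.sum_neg_distrib]
      refine Finset.sum_congr rfl fun i _ => ?_
      have h0 : (-a) i = -(a i) := rfl
      rw [h0, uForm_neg_left]
    rw [hsum, ha y hy, neg_zero]

/-- A splitting element: `x` of order `d` lies in a subgroup `D' ≅ (ℤ/d)²` with
`D = D' ⊕ D'^⊥`. -/
def IsSplitElemU (p : ℕ) {g : ℕ} (e : Fin g → ℕ)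
    (x : ∀ i, ZMod (p ^ e i) × ZMod (p ^ e i)) : Prop :=
  ∃ S : AddSubgroup (∀ i, ZMod (p ^ e i) × ZMod (p ^ e i)), x ∈ S ∧
    Nonempty (S ≃+ (ZMod (addOrderOf x) × ZMod (addOrderOf x))) ∧
    S ⊔ orthU p e S = ⊤ ∧ S ⊓ orthU p e S = ⊥

/-!
The theorem reduces to a numerical criterion, valid for any alternating form `B` with values in
`ℚ/ℤ`: an element `x` of finite order `d` is splitting iff some `y` with `d • y = 0` has `B x y` of
order `d`. If `y` exists, then `⟨x, y⟩` is a nondegenerate copy of `(ℤ/d)²`, and the projection onto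
it exists because the `d`-torsion of `ℚ/ℤ` is cyclic. Conversely, nondegeneracy of `S` makes
`B x` a homomorphism of order `d` on `S`, and a homomorphism of finite order attains its order.

For `d = p^f` with `f ≥ 1`, a sum of elements killed by `d` has order `d` only if one summand does,
so on `𝒰(n₁) ⊕ ⋯ ⊕ 𝒰(n_g)` the criterion is decided in a single component. If `d ∣ n` and
`u, v ∈ 𝒰(n)` are killed by `d`, both are divisible by `n / d`, and `B u v` can have order `d` only
if `d` and `n / d` are coprime, that is, if `p^f` is the exact power of `p` dividing `n`.
-/

section Order

variable {D A : Type*} [AddCommGroup A]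

lemma exists_addOrderOf_apply_eq [AddGroup D] (φ : D →+ A) (hφ : IsOfFinAddOrder φ) :
    ∃ y, addOrderOf (φ y) = addOrderOf φ := by
  have nsmul_range (n : ℕ) : (∀ a : φ.range, n • a = 0) ↔ n • φ = 0 := by
    simp [DFunLike.ext_iff, Subtype.ext_iff]
  have hexp : AddMonoid.exponent φ.range = addOrderOf φ :=
    Nat.dvd_right_iff_eq.1 fun n ↦ by
      rw [AddMonoid.exponent_dvd_iff_forall_nsmul_eq_zero, nsmul_range,
        addOrderOf_dvd_iff_nsmul_eq_zero]
  have hexists : AddMonoid.ExponentExists φ.range :=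
    AddMonoid.exponent_pos.1 (hexp ▸ hφ.addOrderOf_pos)
  obtain ⟨a, ha⟩ := AddMonoid.exists_addOrderOf_eq_exponent hexists
  obtain ⟨y, hy⟩ := a.2
  exact ⟨y, by rw [hy, AddSubgroup.addOrderOf_coe, ha, hexp]⟩

lemma mem_zmultiples_of_addOrderOf_nsmul_eq_zero {𝕜 : Type*} [Field 𝕜] [LinearOrder 𝕜]
    [IsStrictOrderedRing 𝕜] {t : 𝕜} [Fact (0 < t)] {a b : AddCircle t} (hb : IsOfFinAddOrder b)
    (h : addOrderOf b • a = 0) : a ∈ AddSubgroup.zmultiples b := by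
  have hd := hb.addOrderOf_pos
  set c : AddCircle t := ((t / addOrderOf b : 𝕜) : AddCircle t)
  have mem_c {u : AddCircle t} (hu : addOrderOf b • u = 0) : u ∈ AddSubgroup.zmultiples c := by
    obtain ⟨m, -, rfl⟩ := (AddCircle.nsmul_eq_zero_iff hd).1 hu
    refine ⟨m, ?_⟩
    simp only [c, natCast_zsmul, ← AddCircle.coe_nsmul, nsmul_eq_mul]
    congr 1
    ring
  have hc : addOrderOf c = addOrderOf b := AddCircle.addOrderOf_period_div hd
  have : Finite (AddSubgroup.zmultiples c) :=
    finite_zmultiples.2 (addOrderOf_pos_iff.1 (hc ▸ hd))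
  have hbc : AddSubgroup.zmultiples b = AddSubgroup.zmultiples c :=
    AddSubgroup.eq_of_le_of_card_ge
      (AddSubgroup.zmultiples_le_of_mem (mem_c (addOrderOf_nsmul_eq_zero b)))
      (by rw [Nat.card_zmultiples, Nat.card_zmultiples, hc])
  exact hbc ▸ mem_c h

lemma exists_addOrderOf_eq_of_addOrderOf_sum_eq {ι : Type*} {s : Finset ι} {a : ι → A} {p k : ℕ}
    (hp : p.Prime) (ha : ∀ i ∈ s, p ^ (k + 1) • a i = 0)
    (hsum : addOrderOf (∑ i ∈ s, a i) = p ^ (k + 1)) :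
    ∃ i ∈ s, addOrderOf (a i) = p ^ (k + 1) := by
  have := Fact.mk hp
  have hne : ∑ i ∈ s, p ^ k • a i ≠ 0 := fun h ↦ by
    rw [← Finset.smul_sum, ← addOrderOf_dvd_iff_nsmul_eq_zero, hsum,
      Nat.pow_dvd_pow_iff_le_right hp.one_lt] at h
    exact k.not_succ_le_self h
  obtain ⟨i, hi, hik⟩ := Finset.exists_ne_zero_of_sum_ne_zero hne
  exact ⟨i, hi, addOrderOf_eq_prime_pow hik (ha i hi)⟩

lemma addOrderOf_pi_eq_pow_of_forall_le {ι : Type*} {M : ι → Type*} [∀ i, AddMonoid (M i)]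
    {x : ∀ i, M i} {q : ℕ} {f : ι → ℕ} (hf : ∀ i, addOrderOf (x i) = q ^ f i) {i : ι}
    (hi : ∀ j, f j ≤ f i) : addOrderOf x = q ^ f i := by
  refine Nat.dvd_antisymm (addOrderOf_dvd_of_nsmul_eq_zero ?_)
    (hf i ▸ addOrderOf_apply_dvd_addOrderOf i)
  funext j
  exact addOrderOf_dvd_iff_nsmul_eq_zero.1 (hf j ▸ pow_dvd_pow q (hi j))

lemma nonempty_closure_pair_addEquiv [AddCommGroup D] {x y : D}
    (h : Disjoint (AddSubgroup.zmultiples x) (AddSubgroup.zmultiples y)) :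
    Nonempty (AddSubgroup.closure {x, y} ≃+ ZMod (addOrderOf x) × ZMod (addOrderOf y)) := by
  let zmodHom (z : D) : ZMod (addOrderOf z) →+ D :=
    ZMod.lift _ ⟨zmultiplesHom D z, by simp [addOrderOf_nsmul_eq_zero]⟩
  have zmodHom_intCast (z : D) (m : ℤ) : zmodHom z m = m • z := by simp [zmodHom]
  let φ := (zmodHom x).coprod (zmodHom y)
  have φ_intCast (m n : ℤ) : φ (m, n) = m • x + n • y := by
    simp [φ, zmodHom_intCast]
  have hφ : Function.Injective φ := by
    refine (injective_iff_map_eq_zero φ).2 fun ⟨a, b⟩ hab ↦ ?_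
    obtain ⟨m, rfl⟩ := ZMod.intCast_surjective a
    obtain ⟨n, rfl⟩ := ZMod.intCast_surjective b
    rw [φ_intCast] at hab
    have hmx : m • x = 0 := AddSubgroup.disjoint_def.1 h ⟨m, rfl⟩
      (eq_neg_of_add_eq_zero_left hab ▸ neg_mem ⟨n, rfl⟩)
    have hny : n • y = 0 := by rwa [hmx, zero_add] at hab
    ext
    · exact (ZMod.intCast_zmod_eq_zero_iff_dvd _ _).2 (addOrderOf_dvd_iff_zsmul_eq_zero.2 hmx)
    · exact (ZMod.intCast_zmod_eq_zero_iff_dvd _ _).2 (addOrderOf_dvd_iff_zsmul_eq_zero.2 hny)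
  have hrange : AddSubgroup.closure {x, y} = φ.range := by
    ext z
    simp only [AddSubgroup.mem_closure_pair, AddMonoidHom.mem_range, Prod.exists,
      ZMod.intCast_surjective.exists, φ_intCast]
  exact ⟨(AddEquiv.addSubgroupCongr hrange).trans (AddMonoidHom.ofInjective hφ).symm⟩

end Order

section Splitting

variable {D A : Type*} [AddCommGroup D] [AddCommGroup A]

/-- The orthogonal complement `S^⊥ = {z | ∀ y ∈ S, B z y = 0}` of a subgroup `S` for a biadditive
map `B`, realised as the kernel of the pairing of `D` against `S`. -/
def orthogonalComplement (B : D →+ D →+ A) (S : AddSubgroup D) : AddSubgroup D :=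
  (B.compl₂ S.subtype).ker

/-- An element `x` of order `d` is splitting for `B` if it lies in a subgroup `S ≅ (ℤ/d)²` with
`D = S ⊕ S^⊥`. -/
def IsSplitting (B : D →+ D →+ A) (x : D) : Prop :=
  ∃ S : AddSubgroup D, x ∈ S ∧ Nonempty (S ≃+ ZMod (addOrderOf x) × ZMod (addOrderOf x)) ∧
    IsCompl S (orthogonalComplement B S)

lemma mem_orthogonalComplement {B : D →+ D →+ A} {S : AddSubgroup D} {z : D} :
    z ∈ orthogonalComplement B S ↔ ∀ y ∈ S, B z y = 0 := by
  simp [orthogonalComplement, DFunLike.ext_iff]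

lemma mem_orthogonalComplement_closure_pair {B : D →+ D →+ A} {x y z : D} :
    z ∈ orthogonalComplement B (AddSubgroup.closure {x, y}) ↔ B z x = 0 ∧ B z y = 0 := by
  refine mem_orthogonalComplement.trans ⟨fun h ↦ ⟨h x ?_, h y ?_⟩, fun ⟨hx, hy⟩ ↦ ?_⟩
  · exact AddSubgroup.subset_closure (Set.mem_insert x {y})
  · exact AddSubgroup.subset_closure (Set.mem_insert_of_mem x rfl)
  · rintro w hw
    obtain ⟨m, n, rfl⟩ := AddSubgroup.mem_closure_pair.1 hw
    simp [hx, hy]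

lemma apply_eq_neg_apply_of_apply_self_eq_zero {B : D →+ D →+ A} (hB : ∀ z, B z z = 0) (x y : D) :
    B x y = -B y x := by
  have h := hB (x + y)
  simp only [map_add, AddMonoidHom.add_apply, hB, zero_add, add_zero] at h
  exact eq_neg_of_add_eq_zero_right h

lemma exists_addOrderOf_apply_eq_of_disjoint_orthogonalComplement {B : D →+ D →+ A}
    {S : AddSubgroup D} (hS : Disjoint S (orthogonalComplement B S)) {x : D} (hxS : x ∈ S)
    (hx : IsOfFinAddOrder x) : ∃ y ∈ S, addOrderOf (B x y) = addOrderOf x := by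
  have order_restrict : addOrderOf ((B x).comp S.subtype) = addOrderOf x := by
    refine addOrderOf_eq_addOrderOf_iff.2 fun n ↦ ?_
    have : n • (B x).comp S.subtype = B.compl₂ S.subtype (n • x) := by ext; simp
    rw [this]
    exact ⟨fun h ↦ AddSubgroup.disjoint_def.1 hS (S.nsmul_mem hxS n) h, fun h ↦ by simp [h]⟩
  obtain ⟨⟨y, hyS⟩, hy⟩ := exists_addOrderOf_apply_eq ((B x).comp S.subtype)
    (addOrderOf_pos_iff.1 (order_restrict ▸ hx.addOrderOf_pos))
  exact ⟨y, hyS, hy.trans order_restrict⟩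

lemma exists_addOrderOf_apply_eq_of_injective {B : D →+ D →+ A} (hB : Function.Injective B) {x : D}
    (hx : IsOfFinAddOrder x) : ∃ y, addOrderOf (B x y) = addOrderOf x := by
  rw [← addOrderOf_injective B hB]
  exact exists_addOrderOf_apply_eq (B x) (B.isOfFinAddOrder hx)

lemma disjoint_zmultiples_of_addOrderOf_apply_eq {B : D →+ D →+ A} {x y : D} (hyy : B y y = 0)
    (hx : addOrderOf (B x y) = addOrderOf x) :
    Disjoint (AddSubgroup.zmultiples x) (AddSubgroup.zmultiples y) := by
  rw [AddSubgroup.disjoint_def']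
  rintro _ _ ⟨m, rfl⟩ ⟨n, rfl⟩ (hmn : m • x = n • y)
  have hm : m • B x y = 0 := by
    rw [← AddMonoidHom.zsmul_apply, ← map_zsmul, hmn, map_zsmul, AddMonoidHom.zsmul_apply, hyy,
      smul_zero]
  rwa [← addOrderOf_dvd_iff_zsmul_eq_zero, hx, addOrderOf_dvd_iff_zsmul_eq_zero] at hm

lemma disjoint_closure_pair_orthogonalComplement {B : D →+ D →+ A} (hB : ∀ z, B z z = 0) {x y : D}
    (hx : addOrderOf (B x y) = addOrderOf x) (hy : addOrderOf (B x y) = addOrderOf y) :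
    Disjoint (AddSubgroup.closure {x, y})
      (orthogonalComplement B (AddSubgroup.closure {x, y})) := by
  rw [AddSubgroup.disjoint_def]
  intro z hz hz'
  obtain ⟨m, n, rfl⟩ := AddSubgroup.mem_closure_pair.1 hz
  obtain ⟨hn, hm⟩ := mem_orthogonalComplement_closure_pair.1 hz'
  simp only [map_add, map_zsmul, AddMonoidHom.add_apply, AddMonoidHom.zsmul_apply, hB, smul_zero,
    zero_add, add_zero] at hn hm
  rw [apply_eq_neg_apply_of_apply_self_eq_zero hB y x, smul_neg, neg_eq_zero] at hn
  rw [← addOrderOf_dvd_iff_zsmul_eq_zero, hx, addOrderOf_dvd_iff_zsmul_eq_zero] at hm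
  rw [← addOrderOf_dvd_iff_zsmul_eq_zero, hy, addOrderOf_dvd_iff_zsmul_eq_zero] at hn
  rw [hm, hn, add_zero]

variable {𝕜 : Type*} [Field 𝕜] [LinearOrder 𝕜] [IsStrictOrderedRing 𝕜] {t : 𝕜} [Fact (0 < t)]

lemma codisjoint_closure_pair_orthogonalComplement {B : D →+ D →+ AddCircle t}
    (hB : ∀ z, B z z = 0) {x y : D} (hxy : IsOfFinAddOrder (B x y))
    (hx : addOrderOf (B x y) = addOrderOf x) (hy : addOrderOf (B x y) = addOrderOf y) :
    Codisjoint (AddSubgroup.closure {x, y})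
      (orthogonalComplement B (AddSubgroup.closure {x, y})) := by
  rw [codisjoint_iff, AddSubgroup.eq_top_iff']
  intro z
  have exists_zsmul {w : D} (hw : addOrderOf (B x y) • w = 0) : ∃ m : ℤ, m • B x y = B z w :=
    mem_zmultiples_of_addOrderOf_nsmul_eq_zero hxy (by rw [← map_nsmul, hw, map_zero])
  obtain ⟨m, hm⟩ := exists_zsmul (hy ▸ addOrderOf_nsmul_eq_zero y)
  obtain ⟨n, hn⟩ := exists_zsmul (hx ▸ addOrderOf_nsmul_eq_zero x)
  refine AddSubgroup.mem_sup.2 ⟨m • x + -n • y, AddSubgroup.mem_closure_pair.2 ⟨m, -n, rfl⟩,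
    z - (m • x + -n • y), ?_, add_sub_cancel _ _⟩
  rw [mem_orthogonalComplement_closure_pair]
  simp [hB, hm, ← hn, apply_eq_neg_apply_of_apply_self_eq_zero hB y x]

theorem isSplitting_iff_exists_addOrderOf_apply_eq {B : D →+ D →+ AddCircle t}
    (hB : ∀ z, B z z = 0) {x : D} (hx : IsOfFinAddOrder x) :
    IsSplitting B x ↔ ∃ y, addOrderOf x • y = 0 ∧ addOrderOf (B x y) = addOrderOf x := by
  constructor
  · rintro ⟨S, hxS, ⟨φ⟩, hS⟩
    obtain ⟨y, hyS, hy⟩ :=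
      exists_addOrderOf_apply_eq_of_disjoint_orthogonalComplement hS.disjoint hxS hx
    have hφ : φ (addOrderOf x • ⟨y, hyS⟩) = 0 := by rw [map_nsmul, ZModModule.char_nsmul_eq_zero]
    exact ⟨y, congrArg Subtype.val ((map_eq_zero_iff φ φ.injective).1 hφ), hy⟩
  · rintro ⟨y, hy, hxy⟩
    have hyx : addOrderOf y = addOrderOf x :=
      Nat.dvd_antisymm (addOrderOf_dvd_of_nsmul_eq_zero hy) (hxy ▸ addOrderOf_map_dvd (B x) y)
    refine ⟨AddSubgroup.closure {x, y}, AddSubgroup.subset_closure (Set.mem_insert x {y}), ?_,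
      disjoint_closure_pair_orthogonalComplement hB hxy (hxy.trans hyx.symm),
      codisjoint_closure_pair_orthogonalComplement hB ((B x).isOfFinAddOrder ?_) hxy
        (hxy.trans hyx.symm)⟩
    · have := nonempty_closure_pair_addEquiv
        (disjoint_zmultiples_of_addOrderOf_apply_eq (hB y) hxy)
      rwa [hyx] at this
    · rwa [← addOrderOf_pos_iff, hyx, addOrderOf_pos_iff]

end Splitting

section OrthogonalSum

variable {ι A : Type*} {D : ι → Type*} [Fintype ι] [∀ i, AddCommGroup (D i)] [AddCommGroup A]

/-- The form `(x, y) ↦ ∑ i, B i (x i) (y i)` on the orthogonal direct sum of the groups `D i`,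
realised as their product over the finite index type. -/
def orthogonalSum (B : ∀ i, D i →+ D i →+ A) : (∀ i, D i) →+ (∀ i, D i) →+ A :=
  ∑ i, ((B i).compl₂ (Pi.evalAddMonoidHom D i)).comp (Pi.evalAddMonoidHom D i)

lemma orthogonalSum_apply (B : ∀ i, D i →+ D i →+ A) (x y : ∀ i, D i) :
    orthogonalSum B x y = ∑ i, B i (x i) (y i) := by
  simp [orthogonalSum, AddMonoidHom.finsetSum_apply]

lemma orthogonalSum_self {B : ∀ i, D i →+ D i →+ A} (hB : ∀ i z, B i z z = 0) (z : ∀ i, D i) :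
    orthogonalSum B z z = 0 := by
  simp [orthogonalSum_apply, hB]

lemma orthogonalSum_single [DecidableEq ι] (B : ∀ i, D i →+ D i →+ A) (x : ∀ i, D i) (i : ι)
    (v : D i) : orthogonalSum B x (Pi.single i v) = B i (x i) v := by
  rw [orthogonalSum_apply, Finset.sum_eq_single i (fun j _ hj ↦ by simp [hj]) (by simp),
    Pi.single_eq_same]

lemma exists_addOrderOf_orthogonalSum_eq_prime_pow_iff {p k : ℕ} (hp : p.Prime)
    {B : ∀ i, D i →+ D i →+ A} {x : ∀ i, D i} :
    (∃ y, p ^ (k + 1) • y = 0 ∧ addOrderOf (orthogonalSum B x y) = p ^ (k + 1)) ↔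
      ∃ i v, p ^ (k + 1) • v = 0 ∧ addOrderOf (B i (x i) v) = p ^ (k + 1) := by
  classical
  constructor
  · rintro ⟨y, hy, hxy⟩
    rw [orthogonalSum_apply] at hxy
    have hy (i) : p ^ (k + 1) • y i = 0 := congrFun hy i
    obtain ⟨i, -, hi⟩ := exists_addOrderOf_eq_of_addOrderOf_sum_eq hp
      (fun i _ ↦ by rw [← map_nsmul, hy, map_zero]) hxy
    exact ⟨i, y i, hy i, hi⟩
  · rintro ⟨i, v, hv, hxv⟩
    exact ⟨Pi.single i v, by rw [← Pi.single_smul, hv, Pi.single_zero],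
      by rwa [orthogonalSum_single]⟩

end OrthogonalSum

section HyperbolicPlane

lemma uForm_add_right (n : ℕ) (x y y' : ZMod n × ZMod n) :
    uForm n x (y + y') = uForm n x y + uForm n x y' := by
  rw [uForm, uForm, uForm, ← map_add, Prod.fst_add, Prod.snd_add]
  congr 1
  ring

/-- The form `uForm n` of `𝒰(n)` as a biadditive map. -/
def uFormHom (n : ℕ) : ZMod n × ZMod n →+ ZMod n × ZMod n →+ AddCircle (1 : ℚ) :=
  AddMonoidHom.mk' (fun x ↦ AddMonoidHom.mk' (uForm n x) (uForm_add_right n x)) fun x x' ↦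
    AddMonoidHom.ext (uForm_add_left n x x')

lemma uFormHom_apply (n : ℕ) (x y : ZMod n × ZMod n) :
    uFormHom n x y = uHom n (x.1 * y.2 - x.2 * y.1) :=
  rfl

lemma uFormHom_self (n : ℕ) (x : ZMod n × ZMod n) : uFormHom n x x = 0 := by
  rw [uFormHom_apply, mul_comm, sub_self, map_zero]

lemma uHom_injective (n : ℕ) [NeZero n] : Function.Injective (uHom n) := by
  refine (ZMod.lift_injective n).2 fun m hm ↦ ?_
  have order_inv : addOrderOf (((n : ℚ)⁻¹ : ℚ) : AddCircle (1 : ℚ)) = n := by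
    rw [← one_div, AddCircle.addOrderOf_period_div (NeZero.pos n)]
  rwa [ZMod.intCast_zmod_eq_zero_iff_dvd, ← order_inv, addOrderOf_dvd_iff_zsmul_eq_zero]

lemma uFormHom_injective (n : ℕ) [NeZero n] : Function.Injective (uFormHom n) := by
  refine (injective_iff_map_eq_zero _).2 fun x hx ↦ ?_
  have huHom (y : ZMod n × ZMod n) : x.1 * y.2 - x.2 * y.1 = 0 := by
    rw [← map_eq_zero_iff _ (uHom_injective n), ← uFormHom_apply, hx, AddMonoidHom.zero_apply]
  ext
  · simpa using huHom (0, 1)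
  · simpa using huHom (1, 0)

lemma exists_nsmul_eq_of_nsmul_eq_zero {d c : ℕ} (hd : d ≠ 0) {a : ZMod (d * c)}
    (ha : d • a = 0) : ∃ b, c • b = a := by
  obtain ⟨m, rfl⟩ := ZMod.intCast_surjective a
  have hdvd : (d * c : ℤ) ∣ d * m := by
    rw [← Nat.cast_mul, ← ZMod.intCast_zmod_eq_zero_iff_dvd]
    simpa using ha
  obtain ⟨l, rfl⟩ := Int.dvd_of_mul_dvd_mul_left (by exact_mod_cast hd) hdvd
  exact ⟨l, by simp⟩

lemma exists_nsmul_eq_of_nsmul_prod_eq_zero {d c : ℕ} (hd : d ≠ 0)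
    {x : ZMod (d * c) × ZMod (d * c)} (hx : d • x = 0) : ∃ w, c • w = x := by
  obtain ⟨a, ha⟩ := exists_nsmul_eq_of_nsmul_eq_zero hd (congrArg Prod.fst hx)
  obtain ⟨b, hb⟩ := exists_nsmul_eq_of_nsmul_eq_zero hd (congrArg Prod.snd hx)
  exact ⟨(a, b), Prod.ext ha hb⟩

lemma coprime_of_addOrderOf_uFormHom_eq {d c : ℕ} (hd : d ≠ 0)
    {x y : ZMod (d * c) × ZMod (d * c)} (hx : d • x = 0) (hy : d • y = 0)
    (hxy : addOrderOf (uFormHom (d * c) x y) = d) : d.Coprime c := by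
  obtain ⟨w, rfl⟩ := exists_nsmul_eq_of_nsmul_prod_eq_zero hd hx
  obtain ⟨d', c', -, hd', hc'⟩ := Nat.exists_coprime d c
  have hdvd : d ∣ d' := by
    have hmul : d' * c = c' * d := calc
      d' * c = d' * (c' * d.gcd c) := congrArg (d' * ·) hc'
      _ = c' * (d' * d.gcd c) := by ring
      _ = c' * d := congrArg (c' * ·) hd'.symm
    rw [← hxy, addOrderOf_dvd_iff_nsmul_eq_zero, map_nsmul, AddMonoidHom.nsmul_apply, ← mul_nsmul',
      hmul, mul_nsmul', ← map_nsmul, hy, map_zero, smul_zero]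
  have hd'0 : 0 < d' := Nat.pos_of_ne_zero fun h ↦ hd (by rw [hd', h, zero_mul])
  rw [hd'] at hdvd
  exact Nat.dvd_one.1 (Nat.dvd_of_mul_dvd_mul_left hd'0 (by simpa using hdvd))

lemma exists_addOrderOf_uFormHom_eq_iff {n d : ℕ} [NeZero n] {x : ZMod n × ZMod n}
    (hx : d • x = 0) :
    (∃ y, d • y = 0 ∧ addOrderOf (uFormHom n x y) = d) ↔
      addOrderOf x = d ∧ d.Coprime (n / d) := by
  have order_dvd : addOrderOf x ∣ n :=
    addOrderOf_dvd_of_nsmul_eq_zero (ZModModule.char_nsmul_eq_zero n x)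
  constructor
  · rintro ⟨y, hy, hxy⟩
    have hd : addOrderOf x = d :=
      Nat.dvd_antisymm (addOrderOf_dvd_of_nsmul_eq_zero hx)
        (hxy ▸ addOrderOf_map_dvd ((uFormHom n).flip y) x)
    obtain ⟨c, rfl⟩ := hd ▸ order_dvd
    have hd0 : d ≠ 0 := left_ne_zero_of_mul (NeZero.ne (d * c))
    rw [Nat.mul_div_cancel_left c (Nat.pos_of_ne_zero hd0)]
    exact ⟨hd, coprime_of_addOrderOf_uFormHom_eq hd0 hx hy hxy⟩
  · rintro ⟨rfl, hcoprime⟩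
    obtain ⟨v, hv⟩ := exists_addOrderOf_apply_eq_of_injective (uFormHom_injective n)
      (isOfFinAddOrder_of_finite x)
    -- Scaling `v` into the `d`-torsion keeps the order of `B x v`, as `n / d` is prime to `d`.
    refine ⟨(n / addOrderOf x) • v, ?_, ?_⟩
    · rw [← mul_nsmul', Nat.mul_div_cancel' order_dvd, ZModModule.char_nsmul_eq_zero]
    · rw [map_nsmul, Nat.Coprime.addOrderOf_nsmul (hv ▸ hcoprime), hv]

end HyperbolicPlane

lemma coprime_pow_div_pow_iff_factorization_eq {p n k : ℕ} (hp : p.Prime) (hn : n ≠ 0)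
    (h : p ^ (k + 1) ∣ n) :
    (p ^ (k + 1)).Coprime (n / p ^ (k + 1)) ↔ n.factorization p = k + 1 := by
  obtain ⟨c, rfl⟩ := h
  have hc : c ≠ 0 := right_ne_zero_of_mul hn
  have hpk : p ^ (k + 1) ≠ 0 := left_ne_zero_of_mul hn
  rw [Nat.mul_div_cancel_left c (Nat.pos_of_ne_zero hpk),
    Nat.coprime_pow_left_iff k.succ_pos, hp.coprime_iff_not_dvd,
    hp.dvd_iff_one_le_factorization hc, Nat.factorization_mul hpk hc, hp.factorization_pow]
  simp

theorem isSplitting_orthogonalSum_uFormHom_iff {p k : ℕ} (hp : p.Prime) {ι : Type*} [Fintype ι]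
    {n : ι → ℕ} [∀ i, NeZero (n i)] {x : ∀ i, ZMod (n i) × ZMod (n i)}
    (hx : addOrderOf x = p ^ (k + 1)) :
    IsSplitting (orthogonalSum fun i ↦ uFormHom (n i)) x ↔
      ∃ i, addOrderOf (x i) = p ^ (k + 1) ∧ (n i).factorization p = k + 1 := by
  have hxi (i) : p ^ (k + 1) • x i = 0 := congrFun (hx ▸ addOrderOf_nsmul_eq_zero x) i
  rw [isSplitting_iff_exists_addOrderOf_apply_eq (orthogonalSum_self fun i ↦ uFormHom_self (n i))
    (addOrderOf_pos_iff.1 (hx ▸ pow_pos hp.pos _)), hx,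
    exists_addOrderOf_orthogonalSum_eq_prime_pow_iff hp]
  refine exists_congr fun i ↦ (exists_addOrderOf_uFormHom_eq_iff (hxi i)).trans ?_
  refine and_congr_right fun hi ↦ coprime_pow_div_pow_iff_factorization_eq hp (NeZero.ne (n i)) ?_
  exact hi ▸ addOrderOf_dvd_of_nsmul_eq_zero (ZModModule.char_nsmul_eq_zero (n i) (x i))

theorem splitting_elements_of_p_discriminant_form_general {p : ℕ} (hp : p.Prime) {ι : Type*}
    [Fintype ι] (n : ι → ℕ) [∀ i, NeZero (n i)] {x : ∀ i, ZMod (n i) × ZMod (n i)} (hx : x ≠ 0)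
    {f : ι → ℕ} (hf : ∀ i, addOrderOf (x i) = p ^ f i) :
    IsSplitting (orthogonalSum fun i ↦ uFormHom (n i)) x ↔
      ∃ i, (∀ j, f j ≤ f i) ∧ f i = (n i).factorization p := by
  obtain ⟨i₁, -⟩ := Function.ne_iff.1 hx
  have : Nonempty ι := ⟨i₁⟩
  obtain ⟨i₀, hi₀⟩ := Finite.exists_max f
  have hord : addOrderOf x = p ^ f i₀ := addOrderOf_pi_eq_pow_of_forall_le hf hi₀
  obtain ⟨k, hk⟩ : ∃ k, f i₀ = k + 1 := Nat.exists_eq_succ_of_ne_zero fun h ↦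
    hx (AddMonoid.addOrderOf_eq_one_iff.1 (by rw [hord, h, pow_zero]))
  have max_iff (i) : (∀ j, f j ≤ f i) ↔ f i = k + 1 :=
    ⟨fun hi ↦ hk ▸ le_antisymm (hi₀ i) (hi i₀), fun hi j ↦ hi ▸ hk ▸ hi₀ j⟩
  rw [isSplitting_orthogonalSum_uFormHom_iff hp (hord.trans (by rw [hk]))]
  refine exists_congr fun i ↦ ?_
  rw [hf, Nat.pow_right_inj hp.one_lt, max_iff]
  exact and_congr_right fun hi ↦ by rw [hi, eq_comm]

lemma isSplitElemU_iff_isSplitting {p g : ℕ} {e : Fin g → ℕ}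
    {x : ∀ i, ZMod (p ^ e i) × ZMod (p ^ e i)} :
    IsSplitElemU p e x ↔ IsSplitting (orthogonalSum fun i ↦ uFormHom (p ^ e i)) x := by
  have orthU_eq (S) : orthU p e S = orthogonalComplement (orthogonalSum fun i ↦ uFormHom _) S := by
    ext z
    simp only [mem_orthogonalComplement, orthogonalSum_apply]
    rfl
  simp only [IsSplitElemU, IsSplitting, orthU_eq, isCompl_iff, disjoint_iff, codisjoint_iff,
    and_comm]

/-- **Classification of splitting elements** (Proposition 3.4): a nonzero element
`x = Σᵢ xᵢ` of `𝒰(p^{e₁}) ⊕ ⋯ ⊕ 𝒰(p^{e_g})`, with `ord(xᵢ) = p^{fᵢ}` and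
`ord(x) = p^f = maxᵢ p^{fᵢ}`, is splitting iff there is an index `i` with
`fᵢ = f` and `fᵢ = eᵢ`. -/
theorem splitting_elements_of_p_discriminant_form
    (p : ℕ) (hp : p.Prime) (g : ℕ) (e : Fin g → ℕ) (hmono : Monotone e)
    (x : ∀ i, ZMod (p ^ e i) × ZMod (p ^ e i)) (hx : x ≠ 0)
    (f : Fin g → ℕ) (hf : ∀ i, addOrderOf (x i) = p ^ f i) :
    IsSplitElemU p e x ↔ ∃ i, (∀ j, f j ≤ f i) ∧ f i = e i := by
  have : NeZero p := ⟨hp.ne_zero⟩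
  simpa [hp.factorization_pow] using isSplitElemU_iff_isSplitting.trans
    (splitting_elements_of_p_discriminant_form_general hp (fun i ↦ p ^ e i) hx hf)

end
end

section
/- Let Λ be a symplectic lattice of type (d₁, …, d_g) with d₁ = d₂ = 1, i.e., Λ is isometric to U(d₁) ⊕ ⋯ ⊕ U(d_g) with dᵢ | d_{i+1} and d₁ = d₂ = 1. Then every primitive vector of Λ is splitting if and only if the integers d₃, d₄/d₃, …, d_g/d_{g−1} are square-free and pairwise coprime. -/
/-!
A primitive vector `v` of `Λ` is splitting iff some `w ∈ Λ` has `div(w) = div(v) = (v, w)`. Given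
such a `w`, the plane `⟨v, w⟩ ≅ U(div(v))` contains the orthogonal projection of every lattice
vector, so it is an orthogonal summand. Conversely, in a basis of a splitting plane the coordinates
of `v` are coprime, so `v` extends to a basis `v, w` of that plane.

For a divisor chain the conditions on the consecutive quotients say that every `dᵢ / d₁` is
square-free. In that case a Bézout identity for the coordinates of `v`, weighted by
`dᵢ / gcd(div(v), dᵢ)`, produces `w`. If instead `p² d₁ ∣ dₖ` with `p > 1`, then `v = p f₁ + fₖ` is
primitive and `div(v) ∣ p d₁`. For a `w` as above both `(p f₁, w)` and `(fₖ, w)` would lie in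
`p div(v) ℤ`, whereas their sum is `(v, w) = div(v)`.
-/

lemma exists_dvd_and_sum_mul_eq_gcd {R ι : Type*} [CommRing R] [IsDomain R] [IsBezout R]
    [NormalizedGCDMonoid R] (s : Finset ι) {c x : ι → R} (hc : ∀ i ∈ s, Squarefree (c i))
    (hx : s.gcd x = 1) :
    ∃ y : ι → R, (∀ i ∈ s, s.gcd (c * x) ∣ c i * y i) ∧
      ∑ i ∈ s, c i * x i * y i = s.gcd (c * x) := by
  set D := s.gcd (c * x)
  choose m hm using fun i ↦ gcd_dvd_left D (c i)
  choose r hr using fun i ↦ gcd_dvd_right D (c i)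
  have hrc (i) : r i ∣ c i := ⟨_, (hr i).trans (mul_comm _ _)⟩
  -- A common divisor of the `r i * x i` divides `D`. As `c i = gcd D (c i) * r i` is squarefree,
  -- it is prime to every `r i`, so it divides every `x i`.
  have hgcd : s.gcd (r * x) = 1 := by
    rw [← Finset.normalize_gcd, normalize_eq_one, isUnit_iff_dvd_one, ← hx]
    refine Finset.dvd_gcd fun i hi ↦ ?_
    have ht : s.gcd (r * x) ∣ D := Finset.gcd_mono_fun fun j _ ↦ mul_dvd_mul_right (hrc j) _
    have hrel : IsRelPrime (gcd D (c i)) (r i) :=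
      IsRelPrime.of_squarefree_mul ((hr i) ▸ hc i hi)
    have hcop : IsRelPrime (s.gcd (r * x)) (r i) := fun p hpt hpr ↦
      hrel (dvd_gcd (hpt.trans ht) (hpr.trans (hrc i))) hpr
    exact hcop.dvd_of_dvd_mul_left (Finset.gcd_dvd hi)
  obtain ⟨z, hz⟩ := s.gcd_eq_sum_mul (r * x)
  have hmr (i) : c i * m i = D * r i := by linear_combination m i * hr i - r i * hm i
  refine ⟨m * z, fun i _ ↦ ⟨r i * z i, ?_⟩, ?_⟩
  · linear_combination (norm := (simp only [Pi.mul_apply]; ring)) z i * hmr i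
  · calc ∑ i ∈ s, c i * x i * (m * z) i = D * ∑ i ∈ s, (r * x) i * z i := by
          rw [Finset.mul_sum]
          refine Finset.sum_congr rfl fun i _ ↦ ?_
          linear_combination (norm := (simp only [Pi.mul_apply]; ring)) x i * z i * hmr i
      _ = D := by rw [← hz, hgcd, mul_one]

lemma exists_natCast_dvd_and_sum_mul_eq {ι : Type*} [Fintype ι] {d : ι → ℕ} {e : ℕ} (he : 0 < e)
    (hd : ∀ i, e ∣ d i) (hsq : ∀ i, Squarefree (d i / e)) {x : ι → ℤ}
    (hx : Finset.univ.gcd x = 1) :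
    ∃ (y : ι → ℤ) (D : ℕ), 0 < D ∧ (∀ i, (D : ℤ) ∣ d i * x i) ∧ (∀ i, (D : ℤ) ∣ d i * y i) ∧
      ∑ i, d i * x i * y i = D := by
  choose c hc using hd
  have hdc (i) (z : ℤ) : d i * z = e * (c i * z) := by rw [hc, Nat.cast_mul, mul_assoc]
  have hcsq : ∀ i ∈ Finset.univ, Squarefree (c i : ℤ) := fun i _ ↦ by
    simpa [hc i, he, ← Int.squarefree_natCast] using hsq i
  obtain ⟨y, hy, hsum⟩ := exists_dvd_and_sum_mul_eq_gcd Finset.univ hcsq hx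
  have hGx (i) := Finset.gcd_dvd (f := (fun i ↦ (c i : ℤ)) * x) (Finset.mem_univ i)
  have hG0 : Finset.univ.gcd ((fun i ↦ (c i : ℤ)) * x) ≠ 0 := by
    obtain ⟨i, hi, hxi⟩ := Finset.gcd_ne_zero_iff.1 (hx.trans_ne one_ne_zero)
    exact Finset.gcd_ne_zero_iff.2 ⟨i, hi, mul_ne_zero (hcsq i hi).ne_zero hxi⟩
  obtain ⟨G, hG⟩ := Int.eq_ofNat_of_zero_le (Int.nonneg_of_normalize_eq_self
    (Finset.normalize_gcd (s := Finset.univ) (f := (fun i ↦ (c i : ℤ)) * x)))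
  rw [hG] at hG0 hGx hy hsum
  refine ⟨y, e * G, Nat.mul_pos he (Nat.pos_of_ne_zero (by exact_mod_cast hG0)), fun i ↦ ?_,
    fun i ↦ ?_, ?_⟩
  · rw [hdc, Nat.cast_mul]
    exact mul_dvd_mul_left _ (hGx i)
  · rw [hdc, Nat.cast_mul]
    exact mul_dvd_mul_left _ (hy i (Finset.mem_univ i))
  · simp only [hdc, mul_assoc, ← Finset.mul_sum] at hsum ⊢
    rw [hsum, Nat.cast_mul]

lemma coprime_div_div_of_squarefree_div {e a b a' b' : ℕ} (hea : e ∣ a) (hab : a ∣ b)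
    (hba' : b ∣ a') (hab' : a' ∣ b') (hsq : Squarefree (b' / e)) :
    Nat.Coprime (b / a) (b' / a') := by
  rw [← Nat.div_mul_div hab' (hea.trans (hab.trans hba')), Nat.squarefree_mul_iff] at hsq
  refine hsq.1.symm.coprime_dvd_left ?_
  rw [← Nat.div_mul_div hba' (hea.trans hab), ← Nat.div_mul_div hab hea]
  exact (dvd_mul_right _ _).mul_left _

section DivisorChain

variable {g : ℕ} {d : Fin g → ℕ} {s : Fin g}

lemma squarefree_div_of_consecutive (hd : ∀ i j, i ≤ j → d i ∣ d j) (hs : 0 < d s)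
    (hsq : ∀ i j : Fin g, s ≤ i → (j : ℕ) = i + 1 → Squarefree (d j / d i))
    (hcop : ∀ i j i' j' : Fin g, s ≤ i → (j : ℕ) = i + 1 → s ≤ i' → (j' : ℕ) = i' + 1 → i ≠ i' →
      Nat.Coprime (d j / d i) (d j' / d i')) {i : Fin g} (hi : s ≤ i) :
    Squarefree (d i / d s) := by
  -- Coprimality to the later quotients is carried along to make the induction go through.
  have hsq_coprime (n : ℕ) (hn : (s : ℕ) ≤ n) : ∀ hng : n < g, Squarefree (d ⟨n, hng⟩ / d s) ∧
      ∀ i j : Fin g, n ≤ i → (j : ℕ) = i + 1 →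
        Nat.Coprime (d ⟨n, hng⟩ / d s) (d j / d i) := by
    induction n, hn using Nat.le_induction with
    | base => simp [Nat.div_self hs]
    | succ n hn ih =>
      intro hng
      obtain ⟨hsqn, hcopn⟩ := ih (by lia)
      rw [← Nat.div_mul_div (hd ⟨n, by lia⟩ ⟨n + 1, hng⟩ (by simp)) (hd s ⟨n, by lia⟩ hn)]
      refine ⟨Nat.squarefree_mul_iff.2 ⟨(hcopn _ _ le_rfl rfl).symm, hsq _ _ hn rfl, hsqn⟩,
        fun i j hi hij ↦ .mul_left ?_ (hcopn i j (by lia) hij)⟩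
      exact hcop _ _ _ _ hn rfl (Fin.le_def.2 (by lia)) hij (Fin.ne_of_lt hi)
  exact (hsq_coprime i hi i.2).1

lemma forall_squarefree_div_iff (hd : ∀ i j, i ≤ j → d i ∣ d j) (hs : ∀ i, d s ∣ d i)
    (hs0 : 0 < d s) :
    (∀ i, Squarefree (d i / d s)) ↔
      (∀ i j : Fin g, s ≤ i → (j : ℕ) = i + 1 → Squarefree (d j / d i)) ∧
        ∀ i j i' j' : Fin g, s ≤ i → (j : ℕ) = i + 1 → s ≤ i' → (j' : ℕ) = i' + 1 → i ≠ i' →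
          Nat.Coprime (d j / d i) (d j' / d i') := by
  have hsucc {i j : Fin g} (hij : (j : ℕ) = i + 1) : d i ∣ d j := hd i j (Fin.le_def.2 (by lia))
  have hlt_dvd {i j i' : Fin g} (hij : (j : ℕ) = i + 1) (hlt : i < i') : d j ∣ d i' :=
    hd j i' (Fin.le_def.2 (by lia))
  refine ⟨fun hsq ↦ ⟨fun i j _ hij ↦ ?_, fun i j i' j' _ hij _ hij' hne ↦ ?_⟩,
    fun ⟨hsq, hcop⟩ i ↦ ?_⟩
  · exact (hsq j).squarefree_of_dvd ⟨_, (Nat.div_mul_div (hsucc hij) (hs i)).symm⟩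
  · rcases hne.lt_or_gt with hlt | hgt
    · exact coprime_div_div_of_squarefree_div (hs i) (hsucc hij) (hlt_dvd hij hlt) (hsucc hij')
        (hsq j')
    · exact (coprime_div_div_of_squarefree_div (hs i') (hsucc hij') (hlt_dvd hij' hgt) (hsucc hij)
        (hsq j)).symm
  · rcases le_total s i with hsi | his
    · exact squarefree_div_of_consecutive hd hs0 hsq hcop hsi
    · rw [(hd i s his).antisymm (hs i), Nat.div_self hs0]
      exact squarefree_one

end DivisorChain

section Splitting

variable {V : Type} [AddCommGroup V] [Module ℚ V] {B : V →ₗ[ℚ] V →ₗ[ℚ] ℚ} {L : Submodule ℤ V}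
  {v w : V} {d : ℕ}

lemma IsPrimitive.isUnit_of_zsmul_eq (hv : IsPrimitive L v) (hv0 : v ≠ 0) {n : ℤ} {u : V}
    (hu : u ∈ L) (h : n • u = v) : IsUnit n := by
  have hn : (n : ℚ) ≠ 0 := by
    intro hn
    exact hv0 (by rw [← h, Int.cast_eq_zero.1 hn, zero_smul])
  have hu' : u ∈ (Submodule.span ℚ {v}).restrictScalars ℤ ⊓ L := by
    refine ⟨Submodule.mem_span_singleton.2 ⟨(n : ℚ)⁻¹, ?_⟩, hu⟩
    rw [← h, ← Int.cast_smul_eq_zsmul ℚ, inv_smul_smul₀ hn]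
  obtain ⟨m, rfl⟩ := Submodule.mem_span_singleton.1 (hv.2 ▸ hu')
  have hmul : ((n * m : ℤ) : ℚ) • v = (1 : ℚ) • v := by
    rw [Int.cast_smul_eq_zsmul, mul_smul, h, one_smul]
  exact .of_mul_eq_one m (Int.cast_eq_one.1 (smul_left_injective ℚ hv0 hmul))

lemma HasDiv.isPrimitive (hw : HasDiv B L w d) (hv : v ∈ L) (hwv : B w v = d) :
    IsPrimitive L v := by
  have hd : (d : ℚ) ≠ 0 := Nat.cast_ne_zero.2 hw.1.ne'
  refine ⟨hv, le_antisymm ?_ ?_⟩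
  · rintro x ⟨hxv, hxL⟩
    obtain ⟨t, rfl⟩ := Submodule.mem_span_singleton.1 hxv
    obtain ⟨n, hn⟩ := hw.2.1 _ hxL
    rw [map_smul, hwv, smul_eq_mul] at hn
    exact Submodule.mem_span_singleton.2
      ⟨n, by rw [mul_right_cancel₀ hd hn, Int.cast_smul_eq_zsmul]⟩
  · rw [Submodule.span_singleton_le_iff_mem]
    exact ⟨Submodule.mem_span_singleton_self v, hv⟩

lemma mem_orthCompIn_span_pair (halt : ∀ v, B v v = 0) {z : V} :
    z ∈ orthCompIn B L (Submodule.span ℤ {v, w}) ↔ z ∈ L ∧ B v z = 0 ∧ B w z = 0 := by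
  refine and_congr_right fun _ ↦ ⟨fun h ↦ ⟨?_, ?_⟩, fun ⟨hv, hw⟩ y hy ↦ ?_⟩
  · rw [bilin_antisymm B halt, h v (Submodule.subset_span (by simp)), neg_zero]
  · rw [bilin_antisymm B halt, h w (Submodule.subset_span (by simp)), neg_zero]
  · obtain ⟨p, q, rfl⟩ := Submodule.mem_span_pair.1 hy
    rw [bilin_antisymm B halt]
    simp only [map_add, map_zsmul, LinearMap.add_apply, LinearMap.smul_apply, hv, hw, smul_zero,
      add_zero, neg_zero]

lemma bilin_pair_left (halt : ∀ v, B v v = 0) (v w : V) (p q : ℤ) :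
    B v (p • v + q • w) = q * B v w := by
  simp only [map_add, map_zsmul, halt, smul_zero, zero_add, zsmul_eq_mul]

lemma bilin_pair_right (halt : ∀ v, B v v = 0) (v w : V) (p q : ℤ) :
    B w (p • v + q • w) = -(p * B v w) := by
  simp only [map_add, map_zsmul, halt, smul_zero, add_zero, zsmul_eq_mul,
    bilin_antisymm B halt w v, mul_neg]

lemma bilin_pair_pair (halt : ∀ v, B v v = 0) (v w : V) (p q r t : ℤ) :
    B (p • v + q • w) (r • v + t • w) = (p * t - q * r : ℤ) * B v w := by
  rw [map_add B, LinearMap.add_apply, map_zsmul B, map_zsmul B, LinearMap.smul_apply,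
    LinearMap.smul_apply, bilin_pair_left halt, bilin_pair_right halt]
  simp only [zsmul_eq_mul]
  push_cast
  ring

lemma eq_zero_of_bilin_pair_eq_zero (halt : ∀ v, B v v = 0) (hvw : B v w ≠ 0) {p q : ℤ}
    (hv : B v (p • v + q • w) = 0) (hw : B w (p • v + q • w) = 0) : p = 0 ∧ q = 0 := by
  rw [bilin_pair_left halt] at hv
  rw [bilin_pair_right halt] at hw
  simpa [hvw] using And.intro hw hv

lemma finrank_span_pair (halt : ∀ v, B v v = 0) (hvw : B v w ≠ 0) :
    Module.finrank ℤ (Submodule.span ℤ {v, w}) = 2 := by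
  have hli : LinearIndependent ℤ ![v, w] := LinearIndependent.pair_iff.2 fun p q h ↦
    eq_zero_of_bilin_pair_eq_zero halt hvw (by simp [h]) (by simp [h])
  have hcard := finrank_span_eq_card hli
  rwa [Matrix.range_cons_cons_empty, Fintype.card_fin] at hcard

lemma span_pair_inf_orthCompIn (halt : ∀ v, B v v = 0) (hvw : B v w ≠ 0) :
    Submodule.span ℤ {v, w} ⊓ orthCompIn B L (Submodule.span ℤ {v, w}) = ⊥ := by
  refine (Submodule.eq_bot_iff _).2 fun z ⟨hz, hz'⟩ ↦ ?_
  obtain ⟨p, q, rfl⟩ := Submodule.mem_span_pair.1 hz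
  obtain ⟨-, hv, hw⟩ := (mem_orthCompIn_span_pair halt).1 hz'
  obtain ⟨rfl, rfl⟩ := eq_zero_of_bilin_pair_eq_zero halt hvw hv hw
  simp

lemma span_pair_sup_orthCompIn (halt : ∀ v, B v v = 0) (hv : v ∈ L) (hw : w ∈ L)
    (hvd : HasDiv B L v d) (hwd : HasDiv B L w d) (hvw : B v w = d) :
    Submodule.span ℤ {v, w} ⊔ orthCompIn B L (Submodule.span ℤ {v, w}) = L := by
  have hle : Submodule.span ℤ {v, w} ≤ L := Submodule.span_le.2 (Set.pair_subset hv hw)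
  refine le_antisymm (sup_le hle fun z hz ↦ hz.1) fun x hx ↦ ?_
  obtain ⟨q, hq⟩ := hvd.2.1 x hx
  obtain ⟨p, hp⟩ := hwd.2.1 x hx
  have hproj : -p • v + q • w ∈ Submodule.span ℤ {v, w} :=
    Submodule.mem_span_pair.2 ⟨-p, q, rfl⟩
  refine Submodule.mem_sup.2 ⟨_, hproj, x - (-p • v + q • w),
    (mem_orthCompIn_span_pair halt).2 ⟨L.sub_mem hx (hle hproj), ?_, ?_⟩, add_sub_cancel _ _⟩
  · rw [map_sub, bilin_pair_left halt, hq, hvw, sub_self]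
  · rw [map_sub, bilin_pair_right halt, hp, hvw]
    push_cast
    ring

lemma isSplitVec_of_hasDiv (halt : ∀ v, B v v = 0) (hv : v ∈ L) (hw : w ∈ L)
    (hvd : HasDiv B L v d) (hwd : HasDiv B L w d) (hvw : B v w = d) : IsSplitVec B L v := by
  have hvw0 : B v w ≠ 0 := by rw [hvw]; exact Nat.cast_ne_zero.2 hvd.1.ne'
  exact ⟨Submodule.span ℤ {v, w}, Submodule.subset_span (Set.mem_insert v _),
    Submodule.span_le.2 (Set.pair_subset hv hw), finrank_span_pair halt hvw0,
    span_pair_sup_orthCompIn halt hv hw hvd hwd hvw, span_pair_inf_orthCompIn halt hvw0⟩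

lemma exists_span_pair_eq_of_finrank_eq_two {M : Type*} [AddCommGroup M] [IsAddTorsionFree M]
    {N : Submodule ℤ M} (hN : N.FG) (h : Module.finrank ℤ N = 2) :
    ∃ e f : M, N = Submodule.span ℤ {e, f} := by
  have : Module.Finite ℤ N := Module.Finite.iff_fg.2 hN
  let b := Module.finBasisOfFinrankEq ℤ N h
  refine ⟨b 0, b 1, ?_⟩
  have hb := congrArg (Submodule.map N.subtype) b.span_eq
  rw [Submodule.map_span, Submodule.map_subtype_top, ← Set.range_comp] at hb
  refine hb.symm.trans (congrArg (Submodule.span ℤ) ?_)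
  ext x
  simp [Fin.exists_fin_two, eq_comm]

lemma exists_span_pair_eq_and_bilin_eq_natCast (halt : ∀ v, B v v = 0) {N : Submodule ℤ V}
    (hN : N.FG) (h : Module.finrank ℤ N = 2) (hint : N ≤ dualLattice B N) :
    ∃ e f : V, N = Submodule.span ℤ {e, f} ∧ ∃ d : ℕ, B e f = d := by
  have : IsAddTorsionFree V := .of_module_rat V
  obtain ⟨e, f, rfl⟩ := exists_span_pair_eq_of_finrank_eq_two hN h
  obtain ⟨m, hm⟩ := hint (Submodule.subset_span (Set.mem_insert e _)) f
    (Submodule.subset_span (Set.mem_insert_of_mem e rfl))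
  obtain ⟨d, rfl | rfl⟩ := m.eq_nat_or_neg
  · exact ⟨e, f, rfl, d, by simpa using hm⟩
  · exact ⟨f, e, by rw [Set.pair_comm], d, by simp [bilin_antisymm B halt f e, hm]⟩

lemma exists_bilin_eq_mul_of_mem_span_pair (halt : ∀ v, B v v = 0) {e f x y : V}
    (hx : x ∈ Submodule.span ℤ {e, f})
    (hy : y ∈ Submodule.span ℤ {e, f} ⊔ orthCompIn B L (Submodule.span ℤ {e, f})) :
    ∃ n : ℤ, B x y = n * B e f := by
  obtain ⟨u, hu, z, hz, rfl⟩ := Submodule.mem_sup.1 hy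
  have hxz : B x z = 0 := by rw [bilin_antisymm B halt, hz.2 x hx, neg_zero]
  obtain ⟨p, q, rfl⟩ := Submodule.mem_span_pair.1 hx
  obtain ⟨r, t, rfl⟩ := Submodule.mem_span_pair.1 hu
  exact ⟨p * t - q * r, by rw [map_add, hxz, add_zero, bilin_pair_pair halt]⟩

lemma IsPrimitive.isCoprime_of_eq_add (hv : IsPrimitive L v) (hv0 : v ≠ 0) {e f : V}
    (he : e ∈ L) (hf : f ∈ L) {p q : ℤ} (h : p • e + q • f = v) : IsCoprime p q := by
  obtain ⟨p', hp'⟩ := Int.gcd_dvd_left p q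
  obtain ⟨q', hq'⟩ := Int.gcd_dvd_right p q
  have hunit : IsUnit (Int.gcd p q : ℤ) := by
    refine hv.isUnit_of_zsmul_eq hv0 (L.add_mem (L.smul_mem p' he) (L.smul_mem q' hf)) ?_
    rw [smul_add, ← mul_smul, ← mul_smul, ← hp', ← hq', h]
  rw [Int.isCoprime_iff_gcd_eq_one]
  simpa [Int.isUnit_iff_natAbs_eq] using hunit

lemma IsSplitVec.exists_hasDiv (halt : ∀ v, B v v = 0) (hfg : L.FG) (hint : L ≤ dualLattice B L)
    (hv0 : v ≠ 0) (hv : IsPrimitive L v) (h : IsSplitVec B L v) :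
    ∃ w ∈ L, ∃ d : ℕ, HasDiv B L v d ∧ HasDiv B L w d ∧ B v w = d := by
  obtain ⟨L₁, hvL₁, hle, hrank, hsup, hinf⟩ := h
  have : IsNoetherian ℤ L := isNoetherian_of_fg_of_noetherian L hfg
  obtain ⟨e, f, rfl, d, hd⟩ := exists_span_pair_eq_and_bilin_eq_natCast halt (hfg.of_le hle) hrank
    fun x hx y hy ↦ hint (hle hx) y (hle hy)
  have hdvd {y : V} (hy : y ∈ Submodule.span ℤ {e, f}) (x : V) (hx : x ∈ L) :
      ∃ n : ℤ, B y x = n * d :=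
    hd ▸ exists_bilin_eq_mul_of_mem_span_pair halt hy (hsup.symm ▸ hx)
  have hd0 : 0 < d := by
    refine Nat.pos_of_ne_zero fun hd0 ↦ ?_
    refine hv0 ((Submodule.eq_bot_iff _).1 hinf v ⟨hvL₁, hv.1, fun y hy ↦ ?_⟩)
    simpa [hd0] using hdvd hvL₁ y (hle hy)
  obtain ⟨p, q, hpq⟩ := Submodule.mem_span_pair.1 hvL₁
  obtain ⟨r, t, hrt⟩ := hv.isCoprime_of_eq_add hv0 (hle (Submodule.subset_span (by simp)))
    (hle (Submodule.subset_span (by simp))) hpq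
  have hw : -t • e + r • f ∈ Submodule.span ℤ {e, f} := Submodule.mem_span_pair.2 ⟨-t, r, rfl⟩
  have hvw : B v (-t • e + r • f) = d := by
    have hrt' : (r * p + t * q : ℚ) = 1 := by exact_mod_cast hrt
    rw [← hpq, bilin_pair_pair halt, hd]
    push_cast
    linear_combination d * hrt'
  refine ⟨_, hle hw, d, ⟨hd0, hdvd hvL₁, _, hle hw, hvw⟩,
    ⟨hd0, hdvd hw, -v, L.neg_mem hv.1, ?_⟩, hvw⟩
  rw [map_neg, ← bilin_antisymm B halt, hvw]

end Splitting

/-- The lattice vector `∑ i, (a i • E i + b i • F i)` with coordinates `a`, `b` in the symplectic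
basis `E`, `F` of an orthogonal decomposition into planes `U(dᵢ) = ⟨E i, F i⟩`. -/
def latticeVec {V ι : Type*} [AddCommGroup V] [Fintype ι] (E F : ι → V) (a b : ι → ℤ) : V :=
  ∑ i, (a i • E i + b i • F i)

namespace OrthoDecompType

variable {V : Type} [AddCommGroup V] [Module ℚ V] {B : V →ₗ[ℚ] V →ₗ[ℚ] ℚ} {L : Submodule ℤ V}
  {g : ℕ} {d : Fin g → ℕ} {E F : Fin g → V}

lemma exists_latticeVec_eq (hdec : OrthoDecompType B L d E F) {x : V} (hx : x ∈ L) :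
    ∃ a b : Fin g → ℤ, latticeVec E F a b = x := by
  obtain ⟨-, -, -, -, hspan⟩ := hdec
  rw [← hspan, Submodule.span_union] at hx
  obtain ⟨y, hy, z, hz, rfl⟩ := Submodule.mem_sup.1 hx
  obtain ⟨a, rfl⟩ := (Submodule.mem_span_range_iff_exists_fun ℤ).1 hy
  obtain ⟨b, rfl⟩ := (Submodule.mem_span_range_iff_exists_fun ℤ).1 hz
  exact ⟨a, b, Finset.sum_add_distrib⟩

lemma latticeVec_mem (hdec : OrthoDecompType B L d E F) (a b : Fin g → ℤ) :
    latticeVec E F a b ∈ L :=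
  L.sum_mem fun i _ ↦ L.add_mem (L.smul_mem _ (hdec.1 i)) (L.smul_mem _ (hdec.2.1 i))

lemma fg (hdec : OrthoDecompType B L d E F) : L.FG :=
  hdec.2.2.2.2 ▸ Submodule.fg_span ((Set.finite_range E).union (Set.finite_range F))

lemma bilin_left_latticeVec (halt : ∀ v, B v v = 0) (hdec : OrthoDecompType B L d E F)
    (k : Fin g) (a b : Fin g → ℤ) : B (E k) (latticeVec E F a b) = d k * b k := by
  obtain ⟨-, -, hEF, horth, -⟩ := hdec
  rw [latticeVec, map_sum, Finset.sum_eq_single k]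
  · rw [bilin_pair_left halt, hEF, mul_comm]
  · intro i _ hi
    obtain ⟨hEE, hEF', -⟩ := horth k i hi.symm
    simp only [map_add, map_zsmul, hEE, hEF', smul_zero, add_zero]
  · simp

lemma bilin_right_latticeVec (halt : ∀ v, B v v = 0) (hdec : OrthoDecompType B L d E F)
    (k : Fin g) (a b : Fin g → ℤ) : B (F k) (latticeVec E F a b) = -(d k * a k) := by
  obtain ⟨-, -, hEF, horth, -⟩ := hdec
  rw [latticeVec, map_sum, Finset.sum_eq_single k]
  · rw [bilin_pair_right halt, hEF, mul_comm]
  · intro i _ hi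
    have hFE : B (F k) (E i) = 0 := by
      rw [bilin_antisymm B halt, (horth i k hi).2.1, neg_zero]
    simp only [map_add, map_zsmul, hFE, (horth k i hi.symm).2.2, smul_zero, add_zero]
  · simp

lemma bilin_latticeVec (halt : ∀ v, B v v = 0) (hdec : OrthoDecompType B L d E F)
    (a b a' b' : Fin g → ℤ) :
    B (latticeVec E F a b) (latticeVec E F a' b') =
      (∑ i, (d i * a i * b' i - d i * b i * a' i) : ℤ) := by
  rw [latticeVec, map_sum, LinearMap.sum_apply, Int.cast_sum]
  refine Finset.sum_congr rfl fun i _ ↦ ?_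
  rw [map_add, LinearMap.add_apply, map_zsmul, map_zsmul, LinearMap.smul_apply,
    LinearMap.smul_apply, hdec.bilin_left_latticeVec halt, hdec.bilin_right_latticeVec halt]
  simp only [zsmul_eq_mul]
  push_cast
  ring

lemma exists_bilin_latticeVec_eq_mul (halt : ∀ v, B v v = 0) (hdec : OrthoDecompType B L d E F)
    {a b : Fin g → ℤ} {D : ℤ} (ha : ∀ i, D ∣ d i * a i) (hb : ∀ i, D ∣ d i * b i) (x : V)
    (hx : x ∈ L) : ∃ n : ℤ, B (latticeVec E F a b) x = n * D := by
  obtain ⟨a', b', rfl⟩ := hdec.exists_latticeVec_eq hx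
  obtain ⟨n, hn⟩ : D ∣ ∑ i, (d i * a i * b' i - d i * b i * a' i) :=
    Finset.dvd_sum fun i _ ↦ dvd_sub ((ha i).mul_right _) ((hb i).mul_right _)
  exact ⟨n, by rw [hdec.bilin_latticeVec halt, hn, Int.cast_mul, mul_comm]⟩

lemma le_dualLattice (halt : ∀ v, B v v = 0) (hdec : OrthoDecompType B L d E F) :
    L ≤ dualLattice B L := by
  intro x hx y hy
  obtain ⟨a, b, rfl⟩ := hdec.exists_latticeVec_eq hx
  simpa using hdec.exists_bilin_latticeVec_eq_mul halt (fun _ ↦ one_dvd _) (fun _ ↦ one_dvd _) y hy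

lemma hasDiv_left (halt : ∀ v, B v v = 0) (hdec : OrthoDecompType B L d E F) {k : Fin g}
    (hk : 0 < d k) : HasDiv B L (E k) (d k) := by
  refine ⟨hk, fun x hx ↦ ?_, F k, hdec.2.1 k, hdec.2.2.1 k⟩
  obtain ⟨a, b, rfl⟩ := hdec.exists_latticeVec_eq hx
  exact ⟨b k, by rw [hdec.bilin_left_latticeVec halt, mul_comm]⟩

lemma gcd_sumElim_eq_one (hdec : OrthoDecompType B L d E F) {a b : Fin g → ℤ}
    (hv : IsPrimitive L (latticeVec E F a b)) (hv0 : latticeVec E F a b ≠ 0) :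
    Finset.univ.gcd (Sum.elim a b) = 1 := by
  have hdvd (i) : Finset.univ.gcd (Sum.elim a b) ∣ Sum.elim a b i :=
    Finset.gcd_dvd (Finset.mem_univ i)
  choose a' ha' using fun i ↦ hdvd (.inl i)
  choose b' hb' using fun i ↦ hdvd (.inr i)
  have hunit : IsUnit (Finset.univ.gcd (Sum.elim a b)) := by
    refine hv.isUnit_of_zsmul_eq hv0 (hdec.latticeVec_mem a' b') ?_
    simp only [latticeVec, Finset.smul_sum, smul_add, ← mul_smul, ← ha', ← hb', Sum.elim_inl,
      Sum.elim_inr]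
  rwa [← normalize_eq_one, Finset.normalize_gcd] at hunit

lemma isSplitVec (halt : ∀ v, B v v = 0) (hdec : OrthoDecompType B L d E F) {i₀ : Fin g}
    (hi₀ : 0 < d i₀) (hd : ∀ i, d i₀ ∣ d i) (hsq : ∀ i, Squarefree (d i / d i₀)) {v : V}
    (hv0 : v ≠ 0) (hv : IsPrimitive L v) : IsSplitVec B L v := by
  obtain ⟨a, b, rfl⟩ := hdec.exists_latticeVec_eq hv.1
  obtain ⟨y, D, hD, hx, hy, hsum⟩ := exists_natCast_dvd_and_sum_mul_eq (d := Sum.elim d d) hi₀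
    (Sum.rec hd hd) (Sum.rec hsq hsq) (hdec.gcd_sumElim_eq_one hv hv0)
  have hw := hdec.latticeVec_mem (fun i ↦ -y (.inr i)) (fun i ↦ y (.inl i))
  have hvw : B (latticeVec E F a b) (latticeVec E F (fun i ↦ -y (.inr i)) fun i ↦ y (.inl i)) =
      D := by
    rw [hdec.bilin_latticeVec halt, ← Int.cast_natCast D, ← hsum, Fintype.sum_sum_type,
      ← Finset.sum_add_distrib]
    simp only [Sum.elim_inl, Sum.elim_inr, mul_neg, sub_neg_eq_add]
  refine isSplitVec_of_hasDiv (d := D) halt hv.1 hw ⟨hD, ?_, _, hw, hvw⟩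
    ⟨hD, ?_, _, L.neg_mem hv.1, ?_⟩ hvw
  · exact hdec.exists_bilin_latticeVec_eq_mul halt (fun i ↦ hx (.inl i)) fun i ↦ hx (.inr i)
  · refine hdec.exists_bilin_latticeVec_eq_mul halt (fun i ↦ ?_) fun i ↦ hy (.inl i)
    rw [mul_neg, dvd_neg]
    exact hy (.inr i)
  · rw [map_neg, ← bilin_antisymm B halt, hvw]

lemma bilin_left_zsmul_add (hdec : OrthoDecompType B L d E F) {i k : Fin g} (hik : i ≠ k) (p : ℤ) :
    B (E k) (p • F i + F k) = d k := by
  obtain ⟨-, -, hEF, horth, -⟩ := hdec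
  rw [map_add, map_zsmul, (horth k i hik.symm).2.1, smul_zero, zero_add, hEF]

lemma bilin_zsmul_add_left (halt : ∀ v, B v v = 0) (hdec : OrthoDecompType B L d E F)
    {i k : Fin g} (hik : i ≠ k) (p : ℤ) : B (p • F i + F k) (E i) = -(p * d i) := by
  obtain ⟨-, -, hEF, horth, -⟩ := hdec
  rw [bilin_antisymm B halt, map_add, map_zsmul, (horth i k hik).2.1, hEF, add_zero, zsmul_eq_mul]

lemma not_isSplitVec_zsmul_add (halt : ∀ v, B v v = 0) (hdec : OrthoDecompType B L d E F)
    {i k : Fin g} (hik : i ≠ k) {p : ℕ} (hp : p ≠ 1) (h : p * p * d i ∣ d k)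
    (hv0 : (p : ℤ) • F i + F k ≠ 0) (hv : IsPrimitive L ((p : ℤ) • F i + F k)) :
    ¬ IsSplitVec B L ((p : ℤ) • F i + F k) := by
  intro hsplit
  obtain ⟨w, hw, D, hvD, hwD, hvw⟩ :=
    hsplit.exists_hasDiv halt hdec.fg (hdec.le_dualLattice halt) hv0 hv
  obtain ⟨c, hc⟩ := h
  obtain ⟨t, ht⟩ := hvD.2.1 (E i) (hdec.1 i)
  rw [hdec.bilin_zsmul_add_left halt hik] at ht
  obtain ⟨n, hn⟩ := hwD.2.1 (F i) (hdec.2.1 i)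
  obtain ⟨a, b, rfl⟩ := hdec.exists_latticeVec_eq hw
  have hunit : (p : ℤ) * (c * t * a k - n) = 1 := by
    have hD : (D : ℚ) ≠ 0 := Nat.cast_ne_zero.2 hvD.1.ne'
    have hc' : (d k : ℚ) = p * p * d i * c := by exact_mod_cast hc
    rw [map_add, LinearMap.add_apply, map_zsmul, LinearMap.smul_apply, zsmul_eq_mul,
      bilin_antisymm B halt, hn, hdec.bilin_right_latticeVec halt, hc'] at hvw
    have : (p : ℚ) * (c * t * a k - n) = 1 := by
      refine mul_right_cancel₀ hD ?_
      push_cast at ht hvw ⊢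
      linear_combination hvw - p * c * a k * ht
    exact_mod_cast this
  exact hp (by simpa [Int.isUnit_iff_natAbs_eq] using IsUnit.of_mul_eq_one _ hunit)

lemma squarefree_div_of_forall_isSplitVec (halt : ∀ v, B v v = 0)
    (hdec : OrthoDecompType B L d E F) (hpos : ∀ i, 0 < d i) {i k : Fin g} (hik : d i ∣ d k)
    (h : ∀ v, v ≠ 0 → IsPrimitive L v → IsSplitVec B L v) : Squarefree (d k / d i) := by
  intro p hp
  rw [Nat.isUnit_iff]
  by_contra hp1
  rw [Nat.dvd_div_iff_mul_dvd hik, mul_comm] at hp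
  have hne : i ≠ k := by
    rintro rfl
    have hpp : p * p ∣ 1 := (Nat.mul_dvd_mul_iff_right (hpos i)).1 (by rwa [one_mul])
    exact hp1 (Nat.dvd_one.1 (dvd_of_mul_right_dvd hpp))
  have hEv := hdec.bilin_left_zsmul_add hne p
  have hv : IsPrimitive L ((p : ℤ) • F i + F k) := (hdec.hasDiv_left halt (hpos k)).isPrimitive
    (L.add_mem (L.smul_mem _ (hdec.2.1 i)) (hdec.2.1 k)) hEv
  have hv0 : (p : ℤ) • F i + F k ≠ 0 := fun hv0 ↦ by
    rw [hv0, map_zero, eq_comm, Nat.cast_eq_zero] at hEv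
    exact (hpos k).ne' hEv
  exact hdec.not_isSplitVec_zsmul_add halt hne hp1 hp hv0 hv (h _ hv0 hv)

end OrthoDecompType

theorem all_primitive_splitting_iff_general {V : Type} [AddCommGroup V] [Module ℚ V]
    {B : V →ₗ[ℚ] V →ₗ[ℚ] ℚ} (halt : ∀ v, B v v = 0) {L : Submodule ℤ V} {g : ℕ} {d : Fin g → ℕ}
    {E F : Fin g → V} (hdec : OrthoDecompType B L d E F) (hpos : ∀ i, 0 < d i) {i₀ : Fin g}
    (hd : ∀ i, d i₀ ∣ d i) :
    (∀ v : V, v ≠ 0 → IsPrimitive L v → IsSplitVec B L v) ↔ ∀ i, Squarefree (d i / d i₀) :=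
  ⟨fun h i ↦ hdec.squarefree_div_of_forall_isSplitVec halt hpos (hd i) h,
    fun hsq _ hv0 hv ↦ hdec.isSplitVec halt (hpos i₀) hd hsq hv0 hv⟩

/-- If `Λ` has type `(d₁, …, d_g)` with `d₁ = d₂ = 1`, then every primitive vector of
`Λ` is splitting iff `d₃, d₄/d₃, …, d_g/d_{g-1}` are square-free and pairwise coprime. -/
theorem all_primitive_splitting_iff
    (V : Type) [AddCommGroup V] [Module ℚ V]
    (B : V →ₗ[ℚ] V →ₗ[ℚ] ℚ)
    (halt : ∀ v, B v v = 0)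
    (hnd : ∀ v : V, (∀ w, B v w = 0) → v = 0)
    (L : Submodule ℤ V) (hfg : L.FG)
    (hspan : Submodule.span ℚ (L : Set V) = ⊤)
    (hint : ∀ x ∈ L, ∀ y ∈ L, ∃ n : ℤ, B x y = (n : ℚ))
    (g : ℕ) (hg : 2 ≤ g)
    (dd : Fin g → ℕ) (hpos : ∀ i, 0 < dd i)
    (hdvd : ∀ i j : Fin g, i ≤ j → dd i ∣ dd j)
    (hd1 : dd ⟨0, by omega⟩ = 1) (hd2 : dd ⟨1, by omega⟩ = 1)
    (E F : Fin g → V)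
    (hdec : OrthoDecompType B L dd E F) :
    (∀ v : V, v ≠ 0 → IsPrimitive L v → IsSplitVec B L v) ↔
      ((∀ i j : Fin g, 1 ≤ (i : ℕ) → (j : ℕ) = (i : ℕ) + 1 → Squarefree (dd j / dd i)) ∧
        (∀ i j i' j' : Fin g, 1 ≤ (i : ℕ) → (j : ℕ) = (i : ℕ) + 1 →
          1 ≤ (i' : ℕ) → (j' : ℕ) = (i' : ℕ) + 1 → i ≠ i' →
          Nat.Coprime (dd j / dd i) (dd j' / dd i'))) := by
  have hdvd₂ (i : Fin g) : dd ⟨1, hg⟩ ∣ dd i := by rw [hd2]; exact one_dvd _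
  exact (all_primitive_splitting_iff_general halt hdec hpos hdvd₂).trans
    (forall_squarefree_div_iff hdvd hdvd₂ (hpos _))
end
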